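/- Let d ≥ 1 and 0 < α < 1. Let k : ℝ^d ∖ {0} → ℝ be smooth away from the origin, positively homogeneous of degree −d, with zero mean on spheres centered at the origin, and let η ∈ C^{1+α}(ℝ^d; ℝ^d). Define the kernel K(x,y) = (η(x) − η(y)) · (∇k)(x − y) for x ≠ y, and the operator (Tf)(x) = lim_{ε→0} ∫_{|x−y|>ε} K(x,y) f(y) dy, defined for smooth compactly supported f. Then T is bounded on L²(ℝ^d): there is a constant C depending only on k, α, d such that ‖Tf‖_{L²(ℝ^d)} ≤ C ‖η‖_{C^{1+α}(ℝ^d)} ‖f‖_{L²(ℝ^d)}. -/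

import Mathlib

open MeasureTheory Real Set Filter Topology

noncomputable section

/-- `ℝ^d` (with the sup norm). -/
abbrev Euc (d : ℕ) : Type := Fin d → ℝ

/-- `d × d` real matrices (with the sup norm). -/
abbrev Mat (d : ℕ) : Type := Fin d → Fin d → ℝ

/-- `f` belongs to `C^α(ℝ^d)` with (both components of the) norm bounded by `M`. -/
def InCa {d : ℕ} {F : Type*} [NormedAddCommGroup F] (α M : ℝ) (f : Euc d → F) : Prop :=
  (∀ x, ‖f x‖ ≤ M) ∧ ∀ x y, ‖f x - f y‖ ≤ M * ‖x - y‖ ^ α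

/-- `f` belongs to `C^{α,p} = C^α(ℝ^d) ∩ L^p(ℝ^d)` with norm bounded by `M`. -/
def InCap {d : ℕ} {F : Type*} [NormedAddCommGroup F] (α p M : ℝ) (f : Euc d → F) : Prop :=
  InCa α M f ∧ eLpNorm f (ENNReal.ofReal p) volume ≤ ENNReal.ofReal M

/-- `f` belongs to `C^{1+α}(ℝ^d)` with norm bounded by `M`. -/
def InC1a {d : ℕ} {F : Type*} [NormedAddCommGroup F] [NormedSpace ℝ F] (α M : ℝ)
    (f : Euc d → F) : Prop :=
  Differentiable ℝ f ∧ (∀ x, ‖f x‖ ≤ M) ∧ InCa α M (fderiv ℝ f)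

/-- `f` belongs to `C^{1+α,p} = C^{1+α}(ℝ^d) ∩ W^{1,p}(ℝ^d)` with norm bounded by `M`. -/
def InC1ap {d : ℕ} {F : Type*} [NormedAddCommGroup F] [NormedSpace ℝ F] (α p M : ℝ)
    (f : Euc d → F) : Prop :=
  Differentiable ℝ f ∧ (∀ x, ‖f x‖ ≤ M) ∧ InCap α p M (fderiv ℝ f) ∧
    eLpNorm f (ENNReal.ofReal p) volume ≤ ENNReal.ofReal M

/-- The heat kernel `g_t`. -/
def heatKer (d : ℕ) (t : ℝ) (x : Euc d) : ℝ :=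
  (4 * π * t) ^ (-(d : ℝ) / 2) * Real.exp (-(∑ i, x i ^ 2) / (4 * t))

/-- Convolution with the heat kernel. -/
def heatConv {d : ℕ} {F : Type*} [NormedAddCommGroup F] [NormedSpace ℝ F] [CompleteSpace F]
    (t : ℝ) (f : Euc d → F) (x : Euc d) : F :=
  ∫ y : Euc d, heatKer d t (x - y) • f y

/-- `𝕃(f)(t) = e^{tΔ} f` (with `e^{0Δ} = Id`). -/
def opL {d : ℕ} {F : Type*} [NormedAddCommGroup F] [NormedSpace ℝ F] [CompleteSpace F]
    (f : Euc d → F) (t : ℝ) : Euc d → F :=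
  if t = 0 then f else heatConv t f

/-- The kernel of `e^{tΔ}ℍ`, `ℍ = I + R ⊗ R` the Leray projector: the inverse Fourier
transform of the (real, even, integrable for `t > 0`) symbol
`(δ_{mn} - ξ_mξ_n/|ξ|²) e^{-4π²t|ξ|²}`. -/
def lerayHeatKer (d : ℕ) (t : ℝ) (x : Euc d) (m n : Fin d) : ℝ :=
  ∫ ξ : Euc d, ((if m = n then (1 : ℝ) else 0) - ξ m * ξ n / (∑ i, ξ i ^ 2)) *
    Real.exp (-(4 * π ^ 2) * t * (∑ i, ξ i ^ 2)) * Real.cos (2 * π * ∑ i, x i * ξ i)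

/-- `div σ` for a matrix-valued field, `(div σ)_n = ∑_j ∂_j σ_{jn}`. -/
def divMat {d : ℕ} (σ : Euc d → Mat d) (y : Euc d) (n : Fin d) : ℝ :=
  ∑ j, fderiv ℝ (fun z => σ z j n) y (Pi.single j 1)

/-- `div u` for a vector field. -/
def divVec {d : ℕ} (u : Euc d → Euc d) (x : Euc d) : ℝ :=
  ∑ j, fderiv ℝ u x (Pi.single j 1) j

/-- `(∇u)_{mn} = ∂_n u_m`, as a matrix. -/
def gradMat {d : ℕ} (u : Euc d → Euc d) (x : Euc d) : Mat d :=
  fun m n => fderiv ℝ u x (Pi.single n 1) m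

/-- `𝕌(σ)(t) = ∫₀ᵗ e^{(t-s)Δ} ℍ div σ(s) ds`. -/
def opU {d : ℕ} (σ : ℝ → Euc d → Mat d) (t : ℝ) (x : Euc d) : Euc d := fun m =>
  ∫ s in (0 : ℝ)..t, ∫ y : Euc d, ∑ n, lerayHeatKer d (t - s) (x - y) m n * divMat (σ s) y n

/-- `𝔾(σ)(t) = ∫₀ᵗ e^{(t-s)Δ} ∇ℍ div σ(s) ds`. -/
def opG {d : ℕ} (σ : ℝ → Euc d → Mat d) (t : ℝ) (x : Euc d) : Mat d := fun m j =>
  ∫ s in (0 : ℝ)..t, ∫ y : Euc d, ∑ n,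
    fderiv ℝ (fun z => lerayHeatKer d (t - s) z m n) (x - y) (Pi.single j 1) * divMat (σ s) y n

/-- Sup norm functional. -/
def supN {X : Type*} {F : Type*} [NormedAddCommGroup F] (f : X → F) : ℝ := ⨆ x, ‖f x‖

/-- Hölder seminorm functional. -/
def holN {d : ℕ} {F : Type*} [NormedAddCommGroup F] (α : ℝ) (f : Euc d → F) : ℝ :=
  ⨆ q : Euc d × Euc d, ‖f q.1 - f q.2‖ / ‖q.1 - q.2‖ ^ α

/-- The `C^{α,p}` norm functional. -/
def capN {d : ℕ} {F : Type*} [NormedAddCommGroup F] (α p : ℝ) (f : Euc d → F) : ℝ :=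
  supN f + holN α f + (eLpNorm f (ENNReal.ofReal p) volume).toReal

/-- The `C^{1+α,p}` norm functional. -/
def c1apN {d : ℕ} {F : Type*} [NormedAddCommGroup F] [NormedSpace ℝ F] (α p : ℝ)
    (f : Euc d → F) : ℝ :=
  supN f + capN α p (fderiv ℝ f) + (eLpNorm f (ENNReal.ofReal p) volume).toReal

/-- `L^∞(0,T;Y)` norm of a path, w.r.t. a norm functional `N` on `Y`. -/
def linfN {Y : Type*} (T : ℝ) (N : Y → ℝ) (f : ℝ → Y) : ℝ :=
  ⨆ t : Icc (0 : ℝ) T, N (f (t : ℝ))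

/-- `C^β(0,T;Y)` norm of a path, w.r.t. a norm functional `N` on `Y`. -/
def cbN {Y : Type*} [Sub Y] (T β : ℝ) (N : Y → ℝ) (f : ℝ → Y) : ℝ :=
  linfN T N f +
    ⨆ q : Icc (0 : ℝ) T × Icc (0 : ℝ) T,
      N (f (q.1 : ℝ) - f (q.2 : ℝ)) / |(q.1 : ℝ) - (q.2 : ℝ)| ^ β

/-- The (classical, principal value) convolution operator with kernel `k`. -/
def pvConv {d : ℕ} {F : Type*} [NormedAddCommGroup F] [NormedSpace ℝ F] [CompleteSpace F]
    (k : Euc d → ℝ) (f : Euc d → F) (x : Euc d) : F :=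
  limUnder (𝓝[>] (0 : ℝ)) fun ε => ∫ y in {y : Euc d | ε < ‖x - y‖}, k (x - y) • f y

/-- The (notional) spatial inverse of a flow map. -/
def invX {d : ℕ} (X : ℝ → Euc d → Euc d) (s : ℝ) : Euc d → Euc d := Function.invFun (X s)

/-- The Lagrangian nonlinearity `𝒰(X,τ) = 𝕃(u₀)∘X + 𝕌(τ∘X⁻¹)∘X`. -/
def calU {d : ℕ} (u₀ : Euc d → Euc d) (X : ℝ → Euc d → Euc d) (τ : ℝ → Euc d → Mat d)
    (t : ℝ) (a : Euc d) : Euc d :=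
  opL u₀ t (X t a) + opU (fun s y => τ s (invX X s y)) t (X t a)

/-- The Lagrangian velocity gradient `g = 𝕃(∇u₀)∘X + 𝔾(τ∘X⁻¹)∘X`. -/
def lagG {d : ℕ} (u₀ : Euc d → Euc d) (X : ℝ → Euc d → Euc d) (τ : ℝ → Euc d → Mat d)
    (t : ℝ) (a : Euc d) : Mat d :=
  opL (gradMat u₀) t (X t a) + opG (fun s y => τ s (invX X s y)) t (X t a)

/-- The Lagrangian nonlinearity `𝒯(X,τ) = F(g,τ)`. -/
def calT {d : ℕ} (F : Mat d → Mat d → Mat d) (u₀ : Euc d → Euc d) (X : ℝ → Euc d → Euc d)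
    (τ : ℝ → Euc d → Mat d) (t : ℝ) (a : Euc d) : Mat d :=
  F (lagG u₀ X τ t a) (τ t a)

/-- `v ⊗ v`. -/
def outer {d : ℕ} (w : Euc d) : Mat d := fun m n => w m * w n

/-- `𝕌(∇w)` for a time dependent matrix field `w`, assembled as a matrix. -/
def opUgrad {d : ℕ} (w : ℝ → Euc d → Mat d) (t : ℝ) (x : Euc d) : Mat d := fun m j =>
  opU (fun s y => fderiv ℝ (w s) y (Pi.single j 1)) t x m

/-- The Navier–Stokes Lagrangian nonlinearity
`𝒱(X,τ,v) = 𝕃(u₀)∘X + 𝕌(τ∘X⁻¹)∘X − 𝕌((v⊗v)∘X⁻¹)∘X`. -/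
def calV {d : ℕ} (u₀ : Euc d → Euc d) (X : ℝ → Euc d → Euc d) (τ : ℝ → Euc d → Mat d)
    (v : ℝ → Euc d → Euc d) (t : ℝ) (a : Euc d) : Euc d :=
  calU u₀ X τ t a - opU (fun s y => outer (v s (invX X s y))) t (X t a)

/-- The Navier–Stokes Lagrangian velocity gradient
`g = 𝕃(∇u₀)∘X + 𝔾(τ∘X⁻¹)∘X − 𝕌(∇((v⊗v)∘X⁻¹))∘X`. -/
def lagGns {d : ℕ} (u₀ : Euc d → Euc d) (X : ℝ → Euc d → Euc d) (τ : ℝ → Euc d → Mat d)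
    (v : ℝ → Euc d → Euc d) (t : ℝ) (a : Euc d) : Mat d :=
  lagG u₀ X τ t a - opUgrad (fun s y => outer (v s (invX X s y))) t (X t a)

/-- The Navier–Stokes Lagrangian nonlinearity `𝒯(X,τ,v) = F(g,τ)`. -/
def calTns {d : ℕ} (F : Mat d → Mat d → Mat d) (u₀ : Euc d → Euc d) (X : ℝ → Euc d → Euc d)
    (τ : ℝ → Euc d → Mat d) (v : ℝ → Euc d → Euc d) (t : ℝ) (a : Euc d) : Mat d :=
  F (lagGns u₀ X τ v t a) (τ t a)

/-- The space–time commutator `[η·∇, 𝔾](σ)`. -/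
def commG {d : ℕ} (η : ℝ → Euc d → Euc d) (σ : ℝ → Euc d → Mat d) (t : ℝ) (x : Euc d) :
    Mat d :=
  fderiv ℝ (opG σ t) x (η t x) - opG (fun s y => fderiv ℝ (σ s) y (η s y)) t x

/-- The space–time commutator `[η·∇, 𝕌](σ)`. -/
def commU {d : ℕ} (η : ℝ → Euc d → Euc d) (σ : ℝ → Euc d → Mat d) (t : ℝ) (x : Euc d) :
    Euc d :=
  fderiv ℝ (opU σ t) x (η t x) - opU (fun s y => fderiv ℝ (σ s) y (η s y)) t x

open scoped Convolution FourierTransform in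
/-- Convolution with an integrable compactly supported kernel is bounded on `L²` by the sup norm of
the Fourier transform of the kernel. -/
theorem eLpNorm_convolution_le_of_norm_fourier_le {V : Type*} [NormedAddCommGroup V]
    [InnerProductSpace ℝ V] [FiniteDimensional ℝ V] [MeasurableSpace V] [BorelSpace V]
    {g f : V → ℂ} (hg : Integrable g) (hgc : HasCompactSupport g) {C : ℝ}
    (hC : ∀ ξ, ‖𝓕 g ξ‖ ≤ C) (hf : ContDiff ℝ (⊤ : ℕ∞) f) (hfc : HasCompactSupport f) :
    eLpNorm (g ⋆[ContinuousLinearMap.mul ℂ ℂ] f) 2 volume ≤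
      ENNReal.ofReal C * eLpNorm f 2 volume := by
  have hC0 : 0 ≤ C := (norm_nonneg _).trans (hC 0)
  have hgf : ContDiff ℝ (⊤ : ℕ∞) (g ⋆[ContinuousLinearMap.mul ℂ ℂ] f) := by
    have := hfc.contDiff_convolution_right (μ := (volume : Measure V))
      (ContinuousLinearMap.mul ℝ ℂ) (f := g) hg.locallyIntegrable hf
    exact this
  have hgfc : HasCompactSupport (g ⋆[ContinuousLinearMap.mul ℂ ℂ] f) :=
    hgc.convolution (ContinuousLinearMap.mul ℂ ℂ) hfc
  let F : SchwartzMap V ℂ := hfc.toSchwartzMap hf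
  let G : SchwartzMap V ℂ := hgfc.toSchwartzMap hgf
  have hFf : (F : V → ℂ) = f := rfl
  have hGf : (G : V → ℂ) = g ⋆[ContinuousLinearMap.mul ℂ ℂ] f := rfl
  have key : ∫ x, ‖G x‖ ^ 2 ≤ C ^ 2 * ∫ x, ‖F x‖ ^ 2 := by
    rw [← SchwartzMap.integral_norm_sq_fourier F, ← SchwartzMap.integral_norm_sq_fourier G,
      ← integral_const_mul]
    have hH2 : ∀ H : SchwartzMap V ℂ, Integrable fun x => ‖H x‖ ^ 2 := fun H =>
      (H.memLp 2).integrable_norm_pow (by norm_num)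
    refine integral_mono (hH2 _) ((hH2 _).const_mul _) fun ξ => ?_
    simp only [SchwartzMap.fourier_coe, hFf, hGf]
    rw [Real.fourier_mul_convolution_eq hg (hFf ▸ F.integrable), norm_mul, mul_pow]
    gcongr
    · exact hC ξ
  have h2 : ∀ H : SchwartzMap V ℂ,
      eLpNorm H 2 volume = ENNReal.ofReal (√(∫ x, ‖H x‖ ^ 2)) := fun H => by
    rw [(H.memLp 2 volume).eLpNorm_eq_integral_rpow_norm (by norm_num) (by norm_num)]
    simp [Real.sqrt_eq_rpow]
  change eLpNorm G 2 volume ≤ ENNReal.ofReal C * eLpNorm F 2 volume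
  rw [h2, h2, ← ENNReal.ofReal_mul hC0]
  refine ENNReal.ofReal_le_ofReal ?_
  refine (Real.sqrt_le_sqrt key).trans_eq ?_
  rw [Real.sqrt_mul (sq_nonneg C), Real.sqrt_sq hC0]

/-- The Fourier transform of a real function with respect to the coordinate pairing. -/
def coordFourier {d : ℕ} (g : Euc d → ℝ) (ξ : Euc d) : ℂ :=
  ∫ z, (Real.fourierChar (-∑ i, z i * ξ i) : ℂ) * (g z : ℂ)

open scoped Convolution FourierTransform in
theorem eLpNorm_integral_sub_mul_le {d : ℕ} {g f : Euc d → ℝ} (hg : Integrable g)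
    (hgc : HasCompactSupport g) {C : ℝ} (hC : ∀ ξ, ‖coordFourier g ξ‖ ≤ C)
    (hf : ContDiff ℝ (⊤ : ℕ∞) f) (hfc : HasCompactSupport f) :
    eLpNorm (fun x => ∫ y, g (x - y) * f y) 2 volume ≤
      ENNReal.ofReal C * eLpNorm f 2 volume := by
  let V := EuclideanSpace ℝ (Fin d)
  let e : V ≃L[ℝ] Euc d := PiLp.continuousLinearEquiv 2 ℝ (fun _ => ℝ)
  have he : MeasurePreserving e volume volume := PiLp.volume_preserving_ofLp (Fin d)
  have hem : MeasurableEmbedding e := e.toHomeomorph.measurableEmbedding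
  let g' : V → ℂ := fun x => (g (e x) : ℂ)
  let f' : V → ℂ := fun x => (f (e x) : ℂ)
  have hg' : Integrable g' := ((he.integrable_comp_emb hem).2 hg).ofReal
  have hgc' : HasCompactSupport g' :=
    (hgc.comp_homeomorph e.toHomeomorph).comp_left (g := Complex.ofReal) (by simp)
  have hfc' : HasCompactSupport f' :=
    (hfc.comp_homeomorph e.toHomeomorph).comp_left (g := Complex.ofReal) (by simp)
  have hf' : ContDiff ℝ (⊤ : ℕ∞) f' :=
    Complex.ofRealCLM.contDiff.comp (hf.comp e.contDiff)
  have hC' : ∀ ξ, ‖𝓕 g' ξ‖ ≤ C := fun ξ => by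
    have : 𝓕 g' ξ = coordFourier g (e ξ) := by
      rw [Real.fourier_eq, coordFourier, ← he.integral_comp hem]
      refine integral_congr_ae (.of_forall fun x => ?_)
      have hin : inner ℝ x ξ = ∑ i, e x i * e ξ i := by
        rw [EuclideanSpace.inner_eq_star_dotProduct]
        simp only [dotProduct, star_trivial, mul_comm]
        rfl
      simp [g', Circle.smul_def, hin]
    rw [this]
    exact hC _
  have key := eLpNorm_convolution_le_of_norm_fourier_le hg' hgc' hC' hf' hfc'
  have h1 : eLpNorm f' 2 volume = eLpNorm f 2 volume := by
    rw [← eLpNorm_comp_measurePreserving hf.continuous.aestronglyMeasurable he]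
    exact eLpNorm_congr_norm_ae (.of_forall fun x => by simp [f'])
  have h2 : ∀ x, (g' ⋆[ContinuousLinearMap.mul ℂ ℂ] f') x
      = ((∫ y, g (e x - y) * f y : ℝ) : ℂ) := fun x => by
    rw [convolution_eq_swap, ← integral_complex_ofReal, ← he.integral_comp hem]
    simp [g', f']
  have hcont : Continuous (fun x => ∫ y, g (x - y) * f y) := by
    have := hfc.continuous_convolution_right (μ := (volume : Measure (Euc d)))
      (ContinuousLinearMap.mul ℝ ℝ) (f := g) hg.locallyIntegrable hf.continuous
    convert this using 2 with x
    rw [convolution_eq_swap]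
    simp
  rw [h1] at key
  refine le_trans (le_of_eq ?_) key
  rw [← eLpNorm_comp_measurePreserving hcont.aestronglyMeasurable he]
  exact eLpNorm_congr_norm_ae (.of_forall fun x => by rw [h2 x]; simp)

/-- The half-open annulus `r < ‖z‖ ≤ s`. -/
def annulus (d : ℕ) (r s : ℝ) : Set (Euc d) := {z | r < ‖z‖ ∧ ‖z‖ ≤ s}

theorem measurableSet_annulus (d : ℕ) (r s : ℝ) : MeasurableSet (annulus d r s) :=
  (measurableSet_lt measurable_const measurable_norm).inter
    (measurableSet_le measurable_norm measurable_const)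

theorem annulus_subset_closedBall (d : ℕ) (r s : ℝ) :
    annulus d r s ⊆ Metric.closedBall 0 s := fun z hz => by simpa using hz.2

theorem ne_zero_of_mem_annulus {d : ℕ} {r s : ℝ} (hr : 0 ≤ r) {z : Euc d}
    (hz : z ∈ annulus d r s) : z ≠ 0 := norm_pos_iff.1 (hr.trans_lt hz.1)

theorem smul_mem_annulus_iff {d : ℕ} {r s c : ℝ} (hc : 0 < c) {z : Euc d} :
    c • z ∈ annulus d (c * r) (c * s) ↔ z ∈ annulus d r s := by
  simp only [annulus, mem_ofPred_eq, norm_smul, Real.norm_eq_abs, abs_of_pos hc]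
  rw [mul_lt_mul_iff_right₀ hc, mul_le_mul_iff_right₀ hc]

/-- A continuous function on `ℝ^d ∖ {0}` which is homogeneous of degree `s` is `O(‖z‖^s)`. -/
theorem exists_norm_le_mul_rpow_of_homogeneous {d : ℕ} {F : Type*} [NormedAddCommGroup F]
    [NormedSpace ℝ F] {m : Euc d → F} {s : ℝ} (hm : ContinuousOn m {x | x ≠ 0})
    (hom : ∀ c : ℝ, 0 < c → ∀ x : Euc d, x ≠ 0 → m (c • x) = c ^ s • m x) :
    ∃ B : ℝ, 0 ≤ B ∧ ∀ z : Euc d, z ≠ 0 → ‖m z‖ ≤ B * ‖z‖ ^ s := by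
  obtain ⟨B, hB⟩ := (isCompact_sphere (0 : Euc d) 1).exists_bound_of_continuousOn
    (hm.mono fun z hz => by
      rintro rfl
      simp at hz)
  refine ⟨max B 0, le_max_right _ _, fun z hz => ?_⟩
  have hz' : 0 < ‖z‖ := norm_pos_iff.2 hz
  have hu : ‖‖z‖⁻¹ • z‖ = 1 := by
    simp [norm_smul, hz'.ne']
  have h1 : m z = ‖z‖ ^ s • m (‖z‖⁻¹ • z) := by
    rw [← hom _ hz' _ (by rw [← norm_pos_iff, hu]; norm_num), smul_smul,
      mul_inv_cancel₀ hz'.ne', one_smul]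
  rw [h1, norm_smul, Real.norm_of_nonneg (by positivity), mul_comm]
  gcongr
  exact (hB _ (by simpa using hu)).trans (le_max_left _ _)

/-- A Calderón–Zygmund kernel: `C¹` away from the origin, homogeneous of degree `-d`, with zero mean
on annuli. -/
structure IsCZKernel {d : ℕ} (m : Euc d → ℝ) : Prop where
  contDiffOn : ContDiffOn ℝ 1 m {x | x ≠ 0}
  hom : ∀ c : ℝ, 0 < c → ∀ x : Euc d, x ≠ 0 → m (c • x) = c ^ (-(d : ℝ)) * m x
  mean : ∀ r s : ℝ, 0 < r → r ≤ s → ∫ z in annulus d r s, m z = 0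

theorem integrableOn_annulus {d : ℕ} {m : Euc d → ℝ} (hm : ContinuousOn m {x | x ≠ 0}) {r s : ℝ}
    (hr : 0 < r) : IntegrableOn m (annulus d r s) := by
  have hK : IsCompact (Metric.closedBall (0 : Euc d) s \ Metric.ball 0 r) :=
    (isCompact_closedBall 0 s).diff Metric.isOpen_ball
  have : IntegrableOn m (Metric.closedBall (0 : Euc d) s \ Metric.ball 0 r) := by
    refine (hm.mono ?_).integrableOn_compact hK
    rintro z ⟨_, hz⟩ rfl
    simp [hr] at hz
  refine this.mono_set fun z hz => ⟨annulus_subset_closedBall d r s hz, ?_⟩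
  simpa using hz.1.le

theorem sum_min_geometric_le (N : ℕ) : ∀ t : ℝ, 0 ≤ t →
    ∑ n ∈ Finset.range N, min (t * (1 / 2) ^ n) (t * (1 / 2) ^ n)⁻¹ ≤ 4 := by
  have step : ∀ (N : ℕ) (t : ℝ),
      ∑ n ∈ Finset.range (N + 1), min (t * (1 / 2) ^ n) (t * (1 / 2) ^ n)⁻¹ =
        ∑ n ∈ Finset.range N, min (t / 2 * (1 / 2) ^ n) (t / 2 * (1 / 2) ^ n)⁻¹ + min t t⁻¹ :=
    fun N t => by
      rw [Finset.sum_range_succ']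
      simp only [pow_succ, pow_zero, mul_one]
      congr 1
      refine Finset.sum_congr rfl fun n _ => ?_
      rw [show t * ((1 / 2) ^ n * (1 / 2)) = t / 2 * (1 / 2) ^ n by ring]
  have h1 : ∀ (N : ℕ) (t : ℝ), 0 ≤ t →
      ∑ n ∈ Finset.range N, min (t * (1 / 2) ^ n) (t * (1 / 2) ^ n)⁻¹ ≤ 2 * t := by
    intro N
    induction N with
    | zero => intro t ht; simpa using ht
    | succ N ih =>
      intro t ht
      rw [step]
      linarith [ih (t / 2) (by positivity), min_le_left t t⁻¹]
  have h2 : ∀ (N : ℕ) (t : ℝ), 1 ≤ t →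
      ∑ n ∈ Finset.range N, min (t * (1 / 2) ^ n) (t * (1 / 2) ^ n)⁻¹ ≤ 4 - 2 * t⁻¹ := by
    intro N
    induction N with
    | zero =>
      intro t ht
      have := inv_le_one_of_one_le₀ ht
      simp only [Finset.range_zero, Finset.sum_empty]
      linarith
    | succ N ih =>
      intro t ht
      have ht0 : 0 < t := by linarith
      rw [step]
      have hmin := min_le_right t t⁻¹
      have hinv : 0 < t⁻¹ := by positivity
      rcases le_total 2 t with h | h
      · have := ih (t / 2) (by linarith)
        rw [inv_div, div_eq_mul_inv 2 t] at this
        linarith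
      · have := h1 N (t / 2) (by positivity)
        have h3 : t + 3 * t⁻¹ ≤ 4 := by
          rw [← sub_nonneg]
          have : 4 - (t + 3 * t⁻¹) = (t - 1) * (3 - t) * t⁻¹ := by field_simp; ring
          rw [this]
          have : 0 ≤ t - 1 := by linarith
          have : 0 ≤ 3 - t := by linarith
          positivity
        linarith
  intro t ht
  rcases le_total 1 t with h | h
  · have : 0 < t⁻¹ := by positivity
    linarith [h2 N t h]
  · linarith [h1 N t ht]

/-- The volume of a thin shell around the sphere of radius `ρ`. -/
theorem volume_real_shell_le {d : ℕ} {ρ δ : ℝ} (hδ : 0 ≤ δ) (hδρ : δ < ρ) (hρ : ρ + δ ≤ 2) :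
    volume.real {z : Euc d | |‖z‖ - ρ| ≤ δ} ≤ 4 * d * 4 ^ (d - 1) * δ := by
  have hsub : {z : Euc d | |‖z‖ - ρ| ≤ δ} ⊆
      Metric.closedBall 0 (ρ + δ) \ Metric.ball 0 (ρ - δ) := by
    intro z hz
    have hz' : |‖z‖ - ρ| ≤ δ := hz
    have := abs_le.1 hz'
    simp only [Set.mem_sdiff, Metric.mem_closedBall, dist_zero_right, Metric.mem_ball, not_lt]
    constructor <;> linarith
  have hfin : volume (Metric.closedBall (0 : Euc d) (ρ + δ)) ≠ ⊤ :=
    measure_closedBall_lt_top.ne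
  refine (measureReal_mono hsub (measure_ne_top_of_subset sdiff_subset hfin)).trans ?_
  rw [measureReal_sdiff (Metric.ball_subset_closedBall.trans
    (Metric.closedBall_subset_closedBall (by linarith))) measurableSet_ball hfin]
  have hb : volume.real (Metric.ball (0 : Euc d) (ρ - δ)) = (2 * (ρ - δ)) ^ d := by
    rw [measureReal_def, Real.volume_pi_ball _ (by linarith),
      ENNReal.toReal_ofReal (by have : 0 < ρ - δ := by linarith
                                positivity)]
    simp
  have hcb : volume.real (Metric.closedBall (0 : Euc d) (ρ + δ)) = (2 * (ρ + δ)) ^ d := by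
    rw [measureReal_def, Real.volume_pi_closedBall _ (by linarith),
      ENNReal.toReal_ofReal (by have : 0 < ρ + δ := by linarith
                                positivity)]
    simp
  rw [hb, hcb]
  refine (le_abs_self _).trans ((abs_pow_sub_pow_le (2 * (ρ + δ)) (2 * (ρ - δ)) d).trans ?_)
  rw [show 2 * (ρ + δ) - 2 * (ρ - δ) = 4 * δ by ring, abs_of_nonneg (by linarith : 0 ≤ 4 * δ),
    abs_of_nonneg (by linarith : 0 ≤ 2 * (ρ + δ)), abs_of_nonneg (by linarith : 0 ≤ 2 * (ρ - δ)),
    max_eq_left (by linarith)]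
  calc 4 * δ * d * (2 * (ρ + δ)) ^ (d - 1) ≤ 4 * δ * d * 4 ^ (d - 1) := by
        gcongr
        · linarith
        · linarith
    _ = _ := by ring

namespace IsCZKernel

variable {d : ℕ} {m : Euc d → ℝ}

theorem continuousOn (hm : IsCZKernel m) : ContinuousOn m {x | x ≠ 0} := hm.contDiffOn.continuousOn

theorem integrable_indicator_annulus (hm : IsCZKernel m) {r s : ℝ} (hr : 0 < r) :
    Integrable ((annulus d r s).indicator m) :=
  (integrableOn_annulus hm.continuousOn hr).integrable_indicator (measurableSet_annulus d r s)

/-- `m` is Lipschitz, at scales at most `1/4`, on the unit annulus. -/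
theorem exists_lipschitz_annulus (hm : IsCZKernel m) : ∃ L : ℝ, 0 ≤ L ∧
    ∀ z ∈ annulus d (1 / 2) 1, ∀ h : Euc d, ‖h‖ ≤ 1 / 4 → ‖m z - m (z - h)‖ ≤ L * ‖h‖ := by
  have hopen : IsOpen {x : Euc d | x ≠ 0} := isOpen_ne
  have hK : IsCompact (Metric.closedBall (0 : Euc d) 2 \ Metric.ball 0 (1 / 4)) :=
    (isCompact_closedBall 0 2).diff Metric.isOpen_ball
  obtain ⟨L, hL⟩ := hK.exists_bound_of_continuousOn
    ((hm.contDiffOn.continuousOn_fderiv_of_isOpen hopen le_rfl).mono (by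
      rintro z ⟨_, hz⟩ rfl
      simp at hz))
  refine ⟨max L 0, le_max_right _ _, fun z hz h hh => ?_⟩
  have hball : ∀ w ∈ Metric.closedBall z (1 / 4),
      w ∈ Metric.closedBall (0 : Euc d) 2 \ Metric.ball 0 (1 / 4) := by
    intro w hw
    rw [Metric.mem_closedBall, dist_eq_norm] at hw
    have h1 : ‖w‖ ≤ ‖w - z‖ + ‖z‖ := by simpa using norm_add_le (w - z) z
    have h2 : ‖z‖ ≤ ‖w - z‖ + ‖w‖ := by
      rw [norm_sub_rev]; simpa using norm_add_le (z - w) w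
    have := hz.1
    have := hz.2
    simp only [Set.mem_sdiff, Metric.mem_closedBall, dist_zero_right, Metric.mem_ball, not_lt]
    constructor <;> linarith
  have hne : ∀ w ∈ Metric.closedBall z (1 / 4), w ≠ 0 := by
    rintro w hw rfl
    have := (hball 0 hw).2
    simp at this
  have := (convex_closedBall z (1 / 4)).norm_image_sub_le_of_norm_fderiv_le (𝕜 := ℝ) (f := m)
    (C := max L 0) (x := z - h) (y := z)
    (fun w hw => (hm.contDiffOn.contDiffAt (hopen.mem_nhds (hne w hw))).differentiableAt
      (by norm_num))
    (fun w hw => (hL w (hball w hw)).trans (le_max_left _ _))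
    (by simpa [dist_eq_norm] using hh) (by simp)
  simpa using this

/-- The `L¹` modulus of continuity of a unit annular piece of `m`. -/
theorem exists_integral_norm_sub_translate_le (hm : IsCZKernel m) : ∃ L : ℝ, 0 ≤ L ∧
    ∀ h : Euc d, ∫ z, ‖(annulus d (1 / 2) 1).indicator m z
      - (annulus d (1 / 2) 1).indicator m (z - h)‖ ≤ L * ‖h‖ := by
  set A := annulus d (1 / 2) 1 with hA
  set g := A.indicator m with hgdef
  have hg : Integrable g := hm.integrable_indicator_annulus (by norm_num)
  obtain ⟨L₀, hL₀, hLip⟩ := hm.exists_lipschitz_annulus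
  obtain ⟨S, hS⟩ : ∃ S : ℝ, ∀ z ∈ A, ‖m z‖ ≤ S := by
    have hK : IsCompact (Metric.closedBall (0 : Euc d) 1 \ Metric.ball 0 (1 / 2)) :=
      (isCompact_closedBall 0 1).diff Metric.isOpen_ball
    obtain ⟨S, hS⟩ := hK.exists_bound_of_continuousOn (hm.continuousOn.mono (by
      rintro z ⟨_, hz⟩ rfl
      simp at hz))
    exact ⟨S, fun z hz => hS z ⟨annulus_subset_closedBall _ _ _ hz, by simpa using hz.1.le⟩⟩
  set V := volume.real (Metric.closedBall (0 : Euc d) 2)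
  set W : ℝ := 4 * d * 4 ^ (d - 1)
  refine ⟨8 * (∫ z, ‖g z‖) + (L₀ * V + max S 0 * (W + W)), ?_, fun h => ?_⟩
  · have : 0 ≤ ∫ z, ‖g z‖ := integral_nonneg fun _ => norm_nonneg _
    positivity
  have hgi : 0 ≤ ∫ z, ‖g z‖ := integral_nonneg fun _ => norm_nonneg _
  rw [add_mul]
  rcases le_or_gt (1 / 4) ‖h‖ with hh | hh
  · have h1 : ∫ z, ‖g z - g (z - h)‖ ≤ ∫ z, (‖g z‖ + ‖g (z - h)‖) := by
      refine integral_mono (hg.sub (hg.comp_sub_right h)).norm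
        (hg.norm.add (hg.comp_sub_right h).norm) fun z => norm_sub_le _ _
    rw [integral_add hg.norm (hg.comp_sub_right h).norm,
      integral_sub_right_eq_self (fun z => ‖g z‖) h] at h1
    have h2 : 0 ≤ (L₀ * V + max S 0 * (W + W)) * ‖h‖ := by positivity
    have h3 : 8 * (∫ z, ‖g z‖) * (1 / 4) ≤ 8 * (∫ z, ‖g z‖) * ‖h‖ := by gcongr
    linarith
  · set Z₁ := {z : Euc d | |‖z‖ - 1| ≤ ‖h‖}
    set Z₂ := {z : Euc d | |‖z‖ - 1 / 2| ≤ ‖h‖}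
    set U := Metric.closedBall (0 : Euc d) 2
    have hZ : ∀ ρ : ℝ, MeasurableSet {z : Euc d | |‖z‖ - ρ| ≤ ‖h‖} := fun ρ =>
      measurableSet_le (by fun_prop) measurable_const
    have hZfin : ∀ ρ : ℝ, volume {z : Euc d | |‖z‖ - ρ| ≤ ‖h‖} ≠ ⊤ := fun ρ => by
      refine measure_ne_top_of_subset (s := Metric.closedBall 0 (ρ + ‖h‖)) (fun z hz => ?_)
        (measure_closedBall_lt_top (μ := (volume : Measure (Euc d)))).ne
      have hz' : |‖z‖ - ρ| ≤ ‖h‖ := hz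
      have := (abs_le.1 hz').2
      simp only [Metric.mem_closedBall, dist_zero_right]
      linarith
    have hpt : ∀ z, ‖g z - g (z - h)‖ ≤ U.indicator (fun _ => L₀ * ‖h‖) z +
        (Z₁.indicator (fun _ => max S 0) z + Z₂.indicator (fun _ => max S 0) z) := by
      intro z
      have hU : 0 ≤ U.indicator (fun _ => L₀ * ‖h‖) z :=
        indicator_nonneg (fun _ _ => by positivity) z
      have hZ₁ : 0 ≤ Z₁.indicator (fun _ => max S 0) z :=
        indicator_nonneg (fun _ _ => by positivity) z
      have hZ₂ : 0 ≤ Z₂.indicator (fun _ => max S 0) z :=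
        indicator_nonneg (fun _ _ => by positivity) z
      have hn1 : ‖z‖ ≤ ‖z - h‖ + ‖h‖ := by simpa using norm_add_le (z - h) h
      have hn2 : ‖z - h‖ ≤ ‖z‖ + ‖h‖ := norm_sub_le z h
      have hshell : (z ∈ A ∧ z - h ∉ A) ∨ (z ∉ A ∧ z - h ∈ A) → max S 0 ≤
          Z₁.indicator (fun _ => max S 0) z + Z₂.indicator (fun _ => max S 0) z := by
        intro hz
        have : z ∈ Z₁ ∨ z ∈ Z₂ := by
          change |‖z‖ - 1| ≤ ‖h‖ ∨ |‖z‖ - 1 / 2| ≤ ‖h‖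
          change ((1 / 2 < ‖z‖ ∧ ‖z‖ ≤ 1) ∧ ¬ (1 / 2 < ‖z - h‖ ∧ ‖z - h‖ ≤ 1)) ∨
            (¬ (1 / 2 < ‖z‖ ∧ ‖z‖ ≤ 1) ∧ (1 / 2 < ‖z - h‖ ∧ ‖z - h‖ ≤ 1)) at hz
          rw [abs_le, abs_le]
          by_contra hcon
          grind
        rcases this with h' | h'
        · rw [indicator_of_mem h']; linarith
        · rw [indicator_of_mem h' (fun _ => max S 0)]; linarith
      by_cases hz : z ∈ A <;> by_cases hzh : z - h ∈ A
      · have hzU : z ∈ U := Metric.closedBall_subset_closedBall (by norm_num)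
          (annulus_subset_closedBall _ _ _ hz)
        rw [hgdef, indicator_of_mem hz, indicator_of_mem hzh, indicator_of_mem hzU]
        linarith [hLip z hz h hh.le]
      · have := hshell (Or.inl ⟨hz, hzh⟩)
        rw [hgdef, indicator_of_mem hz, indicator_of_notMem hzh, sub_zero]
        linarith [hS z hz, le_max_left S 0]
      · have := hshell (Or.inr ⟨hz, hzh⟩)
        rw [hgdef, indicator_of_notMem hz, indicator_of_mem hzh, zero_sub, norm_neg]
        linarith [hS _ hzh, le_max_left S 0]
      · rw [hgdef, indicator_of_notMem hz, indicator_of_notMem hzh, sub_zero, norm_zero]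
        positivity
    have hiU : Integrable (U.indicator (fun _ : Euc d => L₀ * ‖h‖)) :=
      (integrableOn_const (measure_closedBall_lt_top.ne)).integrable_indicator
        Metric.isClosed_closedBall.measurableSet
    have hiZ : ∀ ρ : ℝ, Integrable
        ({z : Euc d | |‖z‖ - ρ| ≤ ‖h‖}.indicator (fun _ : Euc d => max S 0)) := fun ρ =>
      (integrableOn_const (hZfin ρ)).integrable_indicator (hZ ρ)
    have h1 := integral_mono (hg.sub (hg.comp_sub_right h)).norm
      (hiU.add ((hiZ 1).add (hiZ (1 / 2)))) hpt
    rw [integral_add' hiU ((hiZ 1).add (hiZ (1 / 2))), integral_add' (hiZ 1) (hiZ (1 / 2)),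
      integral_indicator_const _ Metric.isClosed_closedBall.measurableSet,
      integral_indicator_const _ (hZ 1), integral_indicator_const _ (hZ (1 / 2))] at h1
    have hv1 := volume_real_shell_le (d := d) (ρ := 1) (norm_nonneg h) (by linarith) (by linarith)
    have hv2 := volume_real_shell_le (d := d) (ρ := 1 / 2) (norm_nonneg h) (by linarith)
      (by linarith)
    simp only [smul_eq_mul] at h1
    refine h1.trans ?_
    have hS0 : 0 ≤ max S 0 := le_max_right _ _
    have e1 := mul_le_mul_of_nonneg_right hv1 hS0
    have e2 := mul_le_mul_of_nonneg_right hv2 hS0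
    have e3 : 0 ≤ 8 * (∫ z, ‖g z‖) * ‖h‖ := by positivity
    calc _ ≤ V * (L₀ * ‖h‖) + (W * ‖h‖ * max S 0 + W * ‖h‖ * max S 0) := by gcongr
      _ ≤ _ := by linarith

end IsCZKernel

theorem norm_fourierChar_sub_one_le (t : ℝ) :
    ‖(Real.fourierChar t : ℂ) - 1‖ ≤ 2 * π * |t| := by
  rw [Real.fourierChar_apply]
  have := Real.norm_exp_I_mul_ofReal_sub_one_le (x := 2 * π * t)
  rw [mul_comm Complex.I] at this
  simpa [abs_mul, abs_of_pos Real.pi_pos] using this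

theorem abs_sum_mul_le {d : ℕ} (z ξ : Euc d) : |∑ i, z i * ξ i| ≤ d * (‖z‖ * ‖ξ‖) := by
  refine (Finset.abs_sum_le_sum_abs _ _).trans ?_
  have : ∀ i ∈ Finset.univ, |z i * ξ i| ≤ ‖z‖ * ‖ξ‖ := fun i _ => by
    rw [abs_mul]
    gcongr
    · exact norm_le_pi_norm z i
    · exact norm_le_pi_norm ξ i
  simpa using Finset.sum_le_card_nsmul _ _ _ this

theorem integrable_fourierChar_mul {d : ℕ} {g : Euc d → ℝ} (hg : Integrable g) (ξ : Euc d) :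
    Integrable fun z => (Real.fourierChar (-∑ i, z i * ξ i) : ℂ) * (g z : ℂ) := by
  have hgC : Integrable fun z => (g z : ℂ) := hg.ofReal
  have hc : Continuous fun z : Euc d => (Real.fourierChar (-∑ i, z i * ξ i) : ℂ) :=
    (continuous_induced_dom : Continuous ((↑) : Circle → ℂ)).comp
      (Real.continuous_fourierChar.comp (by fun_prop))
  exact hgC.bdd_mul (c := 1) hc.aestronglyMeasurable (.of_forall fun z => (Circle.norm_coe _).le)

theorem coordFourier_add {d : ℕ} {g h : Euc d → ℝ} (hg : Integrable g) (hh : Integrable h)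
    (ξ : Euc d) : coordFourier (g + h) ξ = coordFourier g ξ + coordFourier h ξ := by
  simp only [coordFourier]
  rw [← integral_add (integrable_fourierChar_mul hg ξ) (integrable_fourierChar_mul hh ξ)]
  simp [mul_add]

/-- Decay of the Fourier transform in terms of the `L¹` modulus of continuity. -/
theorem norm_coordFourier_le_of_translate {d : ℕ} {g : Euc d → ℝ} (hg : Integrable g) {L : ℝ}
    (hL : ∀ h : Euc d, ∫ z, ‖g z - g (z - h)‖ ≤ L * ‖h‖) {ξ : Euc d} (hξ : ξ ≠ 0) :
    ‖coordFourier g ξ‖ ≤ L * ‖ξ‖⁻¹ := by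
  have hL0 : 0 ≤ L := by
    have h1 := (integral_nonneg fun z => norm_nonneg (g z - g (z - ξ))).trans (hL ξ)
    exact nonneg_of_mul_nonneg_left h1 (norm_pos_iff.2 hξ)
  obtain ⟨i, hi⟩ : ∃ i, ‖ξ i‖ = ‖ξ‖ := by
    have : Nonempty (Fin d) := by
      by_contra hempty
      rw [not_nonempty_iff] at hempty
      exact hξ (Subsingleton.elim _ _)
    obtain ⟨i, hi⟩ := Finite.exists_max fun i => ‖ξ i‖
    exact ⟨i, le_antisymm (norm_le_pi_norm ξ i) ((pi_norm_le_iff_of_nonneg (norm_nonneg _)).2 hi)⟩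
  have hi0 : ξ i ≠ 0 := by
    rw [← norm_ne_zero_iff, hi]
    exact norm_ne_zero_iff.2 hξ
  set h : Euc d := Pi.single i (1 / (2 * ξ i)) with hh
  have hhn : ‖h‖ = ‖ξ‖⁻¹ / 2 := by
    rw [hh, Pi.norm_single, ← hi]
    simp [div_eq_mul_inv]
  have hpair : ∑ j, h j * ξ j = 1 / 2 := by
    rw [Finset.sum_eq_single i (fun j _ hj => by simp [hh, hj]) (by simp)]
    simp only [hh, Pi.single_eq_same]
    field_simp
  have hchar : (Real.fourierChar (1 / 2) : ℂ) = -1 := by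
    rw [Real.fourierChar_apply]
    rw [show ((2 * π * (1 / 2) : ℝ) : ℂ) = π by push_cast; ring]
    exact Complex.exp_pi_mul_I
  have hshift : ∫ z, (Real.fourierChar (-∑ i, z i * ξ i) : ℂ) * (g (z - h) : ℂ)
      = -coordFourier g ξ := by
    rw [coordFourier, ← integral_sub_right_eq_self (fun z : Euc d =>
      (Real.fourierChar (-∑ i, z i * ξ i) : ℂ) * (g z : ℂ)) h, ← integral_neg]
    refine integral_congr_ae (.of_forall fun z => ?_)
    have : -∑ i, (z - h) i * ξ i = -∑ i, z i * ξ i + 1 / 2 := by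
      simp only [Pi.sub_apply, sub_mul, Finset.sum_sub_distrib, hpair]
      ring
    simp only [this, AddChar.map_add_eq_mul, Circle.coe_mul, hchar]
    ring
  have h2 : 2 * coordFourier g ξ =
      ∫ z, (Real.fourierChar (-∑ i, z i * ξ i) : ℂ) * ((g z - g (z - h) : ℝ) : ℂ) := by
    have e1 : ∫ z, (Real.fourierChar (-∑ i, z i * ξ i) : ℂ) * ((g z - g (z - h) : ℝ) : ℂ)
        = coordFourier g ξ - ∫ z, (Real.fourierChar (-∑ i, z i * ξ i) : ℂ) * (g (z - h) : ℂ) := by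
      rw [coordFourier, ← integral_sub (integrable_fourierChar_mul hg ξ)
        (integrable_fourierChar_mul (hg.comp_sub_right h) ξ)]
      simp [mul_sub]
    rw [e1, hshift]
    ring
  have h3 : ‖2 * coordFourier g ξ‖ ≤ L * ‖h‖ := by
    rw [h2]
    refine (norm_integral_le_integral_norm _).trans ((le_of_eq ?_).trans (hL h))
    refine integral_congr_ae (.of_forall fun z => ?_)
    simp only [norm_mul, Circle.norm_coe, one_mul, Complex.norm_real]
  rw [norm_mul, hhn] at h3
  have : 0 ≤ L * ‖ξ‖⁻¹ := by positivity
  simp only [RCLike.norm_ofNat] at h3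
  linarith

/-- A mean zero function supported in the unit ball has small Fourier transform near the origin. -/
theorem norm_coordFourier_le_of_integral_eq_zero {d : ℕ} {g : Euc d → ℝ} (hg : Integrable g)
    (h0 : ∫ z, g z = 0) (hsupp : ∀ z, 1 < ‖z‖ → g z = 0) (ξ : Euc d) :
    ‖coordFourier g ξ‖ ≤ 2 * π * d * (∫ z, ‖g z‖) * ‖ξ‖ := by
  have h1 : coordFourier g ξ =
      ∫ z, ((Real.fourierChar (-∑ i, z i * ξ i) : ℂ) - 1) * (g z : ℂ) := by
    have : ∫ z, (g z : ℂ) = 0 := by rw [integral_complex_ofReal, h0]; simp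
    have hgC : Integrable fun z => (g z : ℂ) := hg.ofReal
    simp only [sub_mul, one_mul]
    rw [integral_sub (integrable_fourierChar_mul hg ξ) hgC, this, sub_zero, coordFourier]
  rw [h1]
  calc _ ≤ ∫ z, 2 * π * d * ‖ξ‖ * ‖g z‖ := by
        refine norm_integral_le_of_norm_le (hg.norm.const_mul _) (.of_forall fun z => ?_)
        rcases le_or_gt ‖z‖ 1 with hz | hz
        · rw [norm_mul, Complex.norm_real]
          gcongr
          refine (norm_fourierChar_sub_one_le _).trans ?_
          rw [abs_neg, mul_assoc (2 * π)]
          gcongr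
          refine (abs_sum_mul_le z ξ).trans ?_
          gcongr
          exact mul_le_of_le_one_left (norm_nonneg _) hz
        · simp [hsupp z hz]
    _ = _ := by rw [integral_const_mul]; ring

namespace IsCZKernel

variable {d : ℕ} {m : Euc d → ℝ}

theorem coordFourier_annulus_scale (hm : IsCZKernel m) {r : ℝ} (hr : 0 < r) (ξ : Euc d) :
    coordFourier ((annulus d (r / 2) r).indicator m) ξ =
      coordFourier ((annulus d (1 / 2) 1).indicator m) (r • ξ) := by
  simp only [coordFourier]
  have h1 := Measure.integral_comp_smul (volume : Measure (Euc d)) (fun z =>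
    (Real.fourierChar (-∑ i, z i * ξ i) : ℂ) * (((annulus d (r / 2) r).indicator m z : ℝ) : ℂ)) r
  have h2 : ∫ z, (Real.fourierChar (-∑ i, z i * ξ i) : ℂ) *
      (((annulus d (r / 2) r).indicator m z : ℝ) : ℂ) = (r ^ d : ℝ) • ∫ z : Euc d,
      (Real.fourierChar (-∑ i, (r • z) i * ξ i) : ℂ) *
        (((annulus d (r / 2) r).indicator m (r • z) : ℝ) : ℂ) := by
    rw [h1, smul_smul, abs_of_pos (by positivity)]
    simp [hr.ne']
  rw [h2, ← integral_smul]
  refine integral_congr_ae (.of_forall fun z => ?_)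
  have hmem : r • z ∈ annulus d (r / 2) r ↔ z ∈ annulus d (1 / 2) 1 := by
    rw [← smul_mem_annulus_iff (r := 1 / 2) (s := 1) hr, mul_one, mul_one_div]
  have hp : ∑ i, (r • z) i * ξ i = ∑ i, z i * (r • ξ) i := by
    refine Finset.sum_congr rfl fun i _ => ?_
    simp only [Pi.smul_apply, smul_eq_mul]
    ring
  simp only [hp]
  by_cases hz : z ∈ annulus d (1 / 2) 1
  · rw [indicator_of_mem hz, indicator_of_mem (hmem.2 hz),
      hm.hom r hr z (ne_zero_of_mem_annulus (by norm_num) hz), Real.rpow_neg hr.le,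
      Real.rpow_natCast, Complex.real_smul]
    push_cast
    have : (r : ℂ) ^ d ≠ 0 := pow_ne_zero _ (by exact_mod_cast hr.ne')
    field_simp
  · rw [indicator_of_notMem hz, indicator_of_notMem (fun h => hz (hmem.1 h))]
    simp

/-- The dyadic truncations of a Calderón–Zygmund kernel have uniformly bounded Fourier transform. -/
theorem exists_norm_coordFourier_le (hm : IsCZKernel m) : ∃ C : ℝ, 0 ≤ C ∧ ∀ (N : ℕ) (ξ : Euc d),
    ‖coordFourier ((annulus d ((1 / 2) ^ N) 1).indicator m) ξ‖ ≤ C := by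
  set g := (annulus d (1 / 2) 1).indicator m with hgdef
  have hg : Integrable g := hm.integrable_indicator_annulus (by norm_num)
  obtain ⟨L, hL0, hL⟩ := hm.exists_integral_norm_sub_translate_le
  set L' := 2 * π * d * ∫ z, ‖g z‖ with hL'
  have hL'0 : 0 ≤ L' := by
    have : 0 ≤ ∫ z, ‖g z‖ := integral_nonneg fun _ => norm_nonneg _
    positivity
  set C := max L L'
  have hC0 : 0 ≤ C := hL0.trans (le_max_left _ _)
  have hpiece : ∀ ξ, ‖coordFourier g ξ‖ ≤ C * min ‖ξ‖ ‖ξ‖⁻¹ := fun ξ => by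
    have hlow : ‖coordFourier g ξ‖ ≤ C * ‖ξ‖ := by
      refine (norm_coordFourier_le_of_integral_eq_zero hg ?_ ?_ ξ).trans ?_
      · rw [hgdef, integral_indicator (measurableSet_annulus d _ _)]
        exact hm.mean _ _ (by norm_num) (by norm_num)
      · exact fun z hz => indicator_of_notMem (fun h => absurd h.2 (not_le.2 hz)) _
      · gcongr
        exact le_max_right _ _
    rw [mul_min_of_nonneg _ _ hC0]
    refine le_min hlow ?_
    rcases eq_or_ne ξ 0 with rfl | hξ
    · simpa using hlow
    · refine (norm_coordFourier_le_of_translate hg hL hξ).trans ?_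
      gcongr
      exact le_max_left _ _
  have hsum : ∀ (N : ℕ) (ξ : Euc d),
      ‖coordFourier ((annulus d ((1 / 2) ^ N) 1).indicator m) ξ‖ ≤
        C * ∑ n ∈ Finset.range N, min (‖ξ‖ * (1 / 2) ^ n) (‖ξ‖ * (1 / 2) ^ n)⁻¹ := by
    intro N ξ
    induction N with
    | zero =>
      have : annulus d ((1 / 2) ^ 0) 1 = ∅ := by
        ext z
        simp only [annulus, pow_zero, mem_ofPred_eq, mem_empty_iff_false, iff_false]
        exact fun h => absurd h.1 (not_lt.2 h.2)
      rw [this]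
      simp [coordFourier]
    | succ N ih =>
      have hpos : (0 : ℝ) < (1 / 2) ^ N := by positivity
      have hle : ((1 : ℝ) / 2) ^ N ≤ 1 := pow_le_one₀ (by norm_num) (by norm_num)
      have hsplit : (annulus d ((1 / 2) ^ (N + 1)) 1).indicator m =
          (annulus d ((1 / 2) ^ N) 1).indicator m +
            (annulus d ((1 / 2) ^ N / 2) ((1 / 2) ^ N)).indicator m := by
        rw [Pi.add_def, ← indicator_union_of_disjoint]
        · congr 1
          ext z
          simp only [annulus, mem_union, mem_ofPred_eq, pow_succ]
          constructor
          · rintro ⟨h1, h2⟩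
            rcases le_or_gt ‖z‖ ((1 / 2) ^ N) with h | h
            · exact Or.inr ⟨by linarith, h⟩
            · exact Or.inl ⟨h, h2⟩
          · rintro (⟨h1, h2⟩ | ⟨h1, h2⟩)
            · exact ⟨by linarith, h2⟩
            · exact ⟨by linarith, by linarith⟩
        · rw [Set.disjoint_left]
          exact fun z h1 h2 => absurd h1.1 (not_lt.2 h2.2)
      rw [hsplit, coordFourier_add (hm.integrable_indicator_annulus hpos)
        (hm.integrable_indicator_annulus (by positivity)), Finset.sum_range_succ, mul_add]
      refine (norm_add_le _ _).trans (add_le_add ih ?_)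
      rw [hm.coordFourier_annulus_scale hpos]
      refine (hpiece _).trans_eq ?_
      rw [norm_smul, Real.norm_of_nonneg hpos.le, mul_comm ‖ξ‖]
  refine ⟨C * 4, by positivity, fun N ξ => (hsum N ξ).trans ?_⟩
  gcongr
  exact sum_min_geometric_le N _ (norm_nonneg ξ)

/-- Uniform `L²` bounds for the dyadic truncations of a Calderón–Zygmund operator. -/
theorem exists_eLpNorm_truncation_le (hm : IsCZKernel m) : ∃ C : ℝ, 0 ≤ C ∧ ∀ (N : ℕ)
    (f : Euc d → ℝ), ContDiff ℝ (⊤ : ℕ∞) f → HasCompactSupport f →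
    eLpNorm (fun x => ∫ y, (annulus d ((1 / 2) ^ N) 1).indicator m (x - y) * f y) 2 volume ≤
      ENNReal.ofReal C * eLpNorm f 2 volume := by
  obtain ⟨C, hC0, hC⟩ := hm.exists_norm_coordFourier_le
  refine ⟨C, hC0, fun N f hf hfc => eLpNorm_integral_sub_mul_le
    (hm.integrable_indicator_annulus (by positivity)) ?_ (hC N) hf hfc⟩
  refine HasCompactSupport.intro (isCompact_closedBall (0 : Euc d) 1) fun z hz => ?_
  exact indicator_of_notMem (fun h => hz (annulus_subset_closedBall _ _ _ h)) _

end IsCZKernel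

theorem fderiv_smul_of_homogeneous {d : ℕ} {F : Euc d → ℝ} {s : ℝ}
    (hom : ∀ c : ℝ, 0 < c → ∀ x : Euc d, x ≠ 0 → F (c • x) = c ^ s * F x) {c : ℝ} (hc : 0 < c)
    {x : Euc d} (hx : x ≠ 0) : fderiv ℝ F (c • x) = c ^ (s - 1) • fderiv ℝ F x := by
  have h1 : (fun y => F (c • y)) =ᶠ[𝓝 x] (c ^ s) • F :=
    (isOpen_ne.eventually_mem hx).mono fun y hy => hom c hc y hy
  have h2 := h1.fderiv_eq (𝕜 := ℝ)
  rw [fderiv_comp_smul, fderiv_const_smul_field, Pi.smul_apply] at h2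
  rw [Real.rpow_sub hc, Real.rpow_one, div_eq_inv_mul, mul_smul, ← h2, smul_smul,
    inv_mul_cancel₀ hc.ne', one_smul]

theorem integral_fderiv_apply_eq_zero {d : ℕ} {Φ : Euc d → ℝ} (hΦ : ContDiff ℝ 1 Φ)
    (hc : HasCompactSupport Φ) (v : Euc d) : ∫ z, fderiv ℝ Φ z v = 0 := by
  have hi : Integrable fun z => fderiv ℝ Φ z v :=
    ((hΦ.continuous_fderiv one_ne_zero).clm_apply continuous_const).integrable_of_hasCompactSupport
      (hc.fderiv_apply ℝ v)
  have := integral_mul_fderiv_eq_neg_fderiv_mul_of_integrable (μ := volume)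
    (f := fun _ : Euc d => (1 : ℝ)) (g := Φ) (v := v) (by simp) (by simpa using hi)
    (by simpa using hΦ.continuous.integrable_of_hasCompactSupport hc)
    (fun x _ => differentiableAt_const _) (fun x _ => (hΦ.differentiable one_ne_zero) x)
  simpa using this

/-- The partial derivatives of a function homogeneous of degree `1 - d` have zero mean over
annuli. -/
theorem integral_annulus_fderiv_eq_zero {d : ℕ} (hd : 1 ≤ d) {F : Euc d → ℝ}
    (hF : ContDiffOn ℝ 1 F {x | x ≠ 0})
    (hom : ∀ c : ℝ, 0 < c → ∀ x : Euc d, x ≠ 0 → F (c • x) = c ^ (1 - (d : ℝ)) * F x)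
    (v : Euc d) {r s : ℝ} (hr : 0 < r) (hrs : r ≤ s) :
    ∫ z in annulus d r s, fderiv ℝ F z v = 0 := by
  have hne : Nonempty (Fin d) := ⟨⟨0, hd⟩⟩
  have hs : 0 < s := hr.trans_le hrs
  have hopen : IsOpen {x : Euc d | x ≠ 0} := isOpen_ne
  set q : Euc d → ℝ := fun z => fderiv ℝ F z v with hq
  have hqc : ContinuousOn q {x | x ≠ 0} :=
    (hF.continuousOn_fderiv_of_isOpen hopen le_rfl).clm_apply continuousOn_const
  have hqhom : ∀ c : ℝ, 0 < c → ∀ x : Euc d, x ≠ 0 → q (c • x) = c ^ (-(d : ℝ)) * q x := by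
    intro c hc x hx
    simp only [hq]
    rw [fderiv_smul_of_homogeneous hom hc hx]
    simp [show (1 - (d : ℝ) - 1) = -d by ring]
  let θ : ContDiffBump (0 : Euc d) := ⟨1 / 2, 1, by norm_num, by norm_num⟩
  have hθ1 : ContDiff ℝ 1 θ := θ.contDiff (n := 1)
  have hin : ∀ w : Euc d, ‖w‖ ≤ 1 / 2 → θ w = 1 := fun w hw =>
    θ.one_of_mem_closedBall (mem_closedBall_zero_iff.2 hw)
  have hout : ∀ w : Euc d, 1 ≤ ‖w‖ → θ w = 0 := fun w hw =>
    θ.zero_of_le_dist (by simpa using hw)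
  set ψ : Euc d → ℝ := fun w => fderiv ℝ θ w v with hψ
  have hψc : Continuous ψ := (hθ1.continuous_fderiv one_ne_zero).clm_apply continuous_const
  have hψin : ∀ w : Euc d, ‖w‖ < 1 / 2 → ψ w = 0 := by
    intro w hw
    have : (θ : Euc d → ℝ) =ᶠ[𝓝 w] fun _ => 1 :=
      ((isOpen_lt continuous_norm continuous_const).eventually_mem hw).mono
        fun y hy => hin y (le_of_lt hy)
    simp [hψ, this.fderiv_eq]
  have hψout : ∀ w : Euc d, 1 < ‖w‖ → ψ w = 0 := by
    intro w hw
    have : (θ : Euc d → ℝ) =ᶠ[𝓝 w] fun _ => 0 :=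
      ((isOpen_lt continuous_const continuous_norm).eventually_mem hw).mono
        fun y hy => hout y (le_of_lt hy)
    simp [hψ, this.fderiv_eq]
  set K : Set (Euc d) := Metric.closedBall 0 1 \ Metric.ball 0 (1 / 2) with hK
  have hKc : IsCompact K := (isCompact_closedBall 0 1).diff Metric.isOpen_ball
  have hK0 : K ⊆ {x | x ≠ 0} := by
    rintro z ⟨_, hz⟩ rfl
    simp at hz
  set P : Euc d → ℝ := K.indicator fun w => q w * (θ w - 1) + F w * ψ w with hP
  have hPi : Integrable P := by
    refine (integrable_indicator_iff hKc.measurableSet).2 (ContinuousOn.integrableOn_compact hKc ?_)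
    exact ((hqc.mono hK0).mul (hθ1.continuous.continuousOn.sub continuousOn_const)).add
      ((hF.continuousOn.mono hK0).mul hψc.continuousOn)
  have hsplit : ∀ w : Euc d, q w * θ w + F w * ψ w = P w + if ‖w‖ ≤ 1 then q w else 0 := by
    intro w
    by_cases h1 : ‖w‖ ≤ 1
    · by_cases h2 : ‖w‖ < 1 / 2
      · have : w ∉ K := fun h => h.2 (by simpa using h2)
        simp [hP, this, h1, hψin w h2, hin w h2.le]
      · have : w ∈ K := ⟨by simpa using h1, by simpa using h2⟩
        simp only [hP, indicator_of_mem this, if_pos h1]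
        ring
    · have : w ∉ K := fun h => h1 (by simpa using h.1)
      push Not at h1
      simp [hP, this, not_le.2 h1, hψout w h1, hout w h1.le]
  have hpiece : ∀ ρ : ℝ, 0 < ρ → ∀ z : Euc d, z ≠ 0 →
      q z * θ (ρ⁻¹ • z) + F z * (ρ⁻¹ * ψ (ρ⁻¹ • z)) =
        ρ⁻¹ ^ d * P (ρ⁻¹ • z) + if ‖z‖ ≤ ρ then q z else 0 := by
    intro ρ hρ z hz
    have hρ' : 0 < ρ⁻¹ := inv_pos.2 hρ
    have h1 := hqhom _ hρ' z hz
    have h2 := hom _ hρ' z hz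
    have hpd : (0 : ℝ) < ρ⁻¹ ^ d := by positivity
    rw [Real.rpow_neg hρ'.le, Real.rpow_natCast] at h1
    rw [Real.rpow_sub hρ', Real.rpow_natCast, Real.rpow_one] at h2
    have h1' : q z = ρ⁻¹ ^ d * q (ρ⁻¹ • z) := by rw [h1]; field_simp
    have h2' : F z * ρ⁻¹ = ρ⁻¹ ^ d * F (ρ⁻¹ • z) := by rw [h2]; field_simp
    have h3 := hsplit (ρ⁻¹ • z)
    have h4 : ‖ρ⁻¹ • z‖ ≤ 1 ↔ ‖z‖ ≤ ρ := by
      rw [norm_smul, Real.norm_eq_abs, abs_of_pos hρ', inv_mul_le_iff₀ hρ, mul_one]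
    simp only [h4] at h3
    calc q z * θ (ρ⁻¹ • z) + F z * (ρ⁻¹ * ψ (ρ⁻¹ • z))
        = q z * θ (ρ⁻¹ • z) + (F z * ρ⁻¹) * ψ (ρ⁻¹ • z) := by ring
      _ = ρ⁻¹ ^ d * (q (ρ⁻¹ • z) * θ (ρ⁻¹ • z) + F (ρ⁻¹ • z) * ψ (ρ⁻¹ • z)) := by
          rw [h2', h1']; ring
      _ = _ := by
          rw [h3, mul_add]
          split_ifs
          · rw [← h1']
          · simp
  have hPint : ∀ ρ : ℝ, 0 < ρ → ∫ z, ρ⁻¹ ^ d * P (ρ⁻¹ • z) = ∫ z, P z := by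
    intro ρ hρ
    rw [integral_const_mul, Measure.integral_comp_smul]
    have : (0 : ℝ) < ρ⁻¹ ^ d := by positivity
    rw [Module.finrank_fin_fun, abs_of_pos (inv_pos.2 this), smul_eq_mul, ← mul_assoc,
      mul_inv_cancel₀ this.ne', one_mul]
  have hPii : ∀ ρ : ℝ, 0 < ρ → Integrable fun z => ρ⁻¹ ^ d * P (ρ⁻¹ • z) := fun ρ hρ =>
    (hPi.comp_smul (inv_ne_zero hρ.ne')).const_mul _
  set Φ : Euc d → ℝ := fun z => F z * (θ (s⁻¹ • z) - θ (r⁻¹ • z)) with hΦ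
  have hdil : ∀ ρ : ℝ, ContDiff ℝ 1 fun z : Euc d => θ (ρ⁻¹ • z) := fun ρ =>
    hθ1.comp (contDiff_const_smul _)
  have hΦ1 : ContDiff ℝ 1 Φ := by
    rw [contDiff_iff_contDiffAt]
    intro z
    by_cases hz : z = 0
    · have : Φ =ᶠ[𝓝 z] fun _ => 0 := by
        have hz' : ‖z‖ < r / 2 := by rw [hz, norm_zero]; positivity
        refine ((isOpen_lt continuous_norm continuous_const).eventually_mem hz').mono fun y hy => ?_
        have hy' : ‖y‖ < r / 2 := hy
        have : ∀ ρ, r ≤ ρ → θ (ρ⁻¹ • y) = 1 := by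
          intro ρ hρ
          have hρ0 : 0 < ρ := hr.trans_le hρ
          refine hin _ ?_
          rw [norm_smul, Real.norm_eq_abs, abs_of_pos (inv_pos.2 hρ0), inv_mul_le_iff₀ hρ0]
          linarith
        simp [hΦ, this r le_rfl, this s hrs]
      exact contDiffAt_const.congr_of_eventuallyEq this
    · exact (hF.contDiffAt (hopen.mem_nhds hz)).mul
        ((hdil s).contDiffAt.sub (hdil r).contDiffAt)
  have hΦc : HasCompactSupport Φ := by
    refine HasCompactSupport.intro (isCompact_closedBall 0 s) fun z hz => ?_
    have hz' : s < ‖z‖ := by simpa using hz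
    have : ∀ ρ, 0 < ρ → ρ ≤ s → θ (ρ⁻¹ • z) = 0 := by
      intro ρ hρ0 hρ
      refine hout _ ?_
      rw [norm_smul, Real.norm_eq_abs, abs_of_pos (inv_pos.2 hρ0), le_inv_mul_iff₀ hρ0]
      linarith
    simp [hΦ, this r hr hrs, this s hs le_rfl]
  have hder : ∀ z : Euc d, z ≠ 0 → fderiv ℝ Φ z v =
      s⁻¹ ^ d * P (s⁻¹ • z) - r⁻¹ ^ d * P (r⁻¹ • z) + (annulus d r s).indicator q z := by
    intro z hz
    have e1 : fderiv ℝ Φ z v = q z * (θ (s⁻¹ • z) - θ (r⁻¹ • z)) +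
        F z * (s⁻¹ * ψ (s⁻¹ • z) - r⁻¹ * ψ (r⁻¹ • z)) := by
      have hdF : DifferentiableAt ℝ F z :=
        (hF.contDiffAt (hopen.mem_nhds hz)).differentiableAt one_ne_zero
      have hd1 : ∀ ρ : ℝ, DifferentiableAt ℝ (fun z : Euc d => θ (ρ⁻¹ • z)) z := fun ρ =>
        (hdil ρ).differentiable one_ne_zero z
      rw [hΦ, fderiv_fun_mul hdF ((hd1 s).fun_sub (hd1 r)), fderiv_fun_sub (hd1 s) (hd1 r),
        fderiv_comp_smul, fderiv_comp_smul]
      simp [hq, hψ]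
      ring
    have e2 : (annulus d r s).indicator q z =
        (if ‖z‖ ≤ s then q z else 0) - if ‖z‖ ≤ r then q z else 0 := by
      by_cases h1 : ‖z‖ ≤ r
      · have : z ∉ annulus d r s := fun h => not_lt.2 h1 h.1
        simp [this, h1, h1.trans hrs]
      · by_cases h2 : ‖z‖ ≤ s
        · have : z ∈ annulus d r s := ⟨not_le.1 h1, h2⟩
          simp [this, h1, h2]
        · have : z ∉ annulus d r s := fun h => h2 h.2
          simp [this, h1, h2]
    rw [e1, e2]
    linarith [hpiece s hs z hz, hpiece r hr z hz]
  have hae : (fun z => fderiv ℝ Φ z v) =ᵐ[volume] fun z =>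
      s⁻¹ ^ d * P (s⁻¹ • z) - r⁻¹ ^ d * P (r⁻¹ • z) + (annulus d r s).indicator q z :=
    (Measure.ae_ne volume 0).mono fun z hz => hder z hz
  have h0 := integral_fderiv_apply_eq_zero hΦ1 hΦc v
  rw [integral_congr_ae hae, integral_add (by exact (hPii s hs).sub (hPii r hr)),
    integral_sub (hPii s hs) (hPii r hr), hPint s hs, hPint r hr, sub_self, zero_add,
    integral_indicator (measurableSet_annulus d r s)] at h0
  · exact h0
  · exact (integrable_indicator_iff (measurableSet_annulus d r s)).2 (integrableOn_annulus hqc hr)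

theorem isCZKernel_coord_mul_fderiv {d : ℕ} (hd : 1 ≤ d) {k : Euc d → ℝ}
    (hk_smooth : ContDiffOn ℝ (⊤ : ℕ∞) k {x : Euc d | x ≠ 0})
    (hk_hom : ∀ c : ℝ, 0 < c → ∀ x : Euc d, x ≠ 0 → k (c • x) = c ^ (-(d : ℝ)) * k x)
    (hk_mean : ∀ r₁ r₂ : ℝ, 0 < r₁ → r₁ ≤ r₂ →
      (∫ z in {z : Euc d | r₁ ≤ ‖z‖ ∧ ‖z‖ ≤ r₂}, k z) = 0) (i j : Fin d) :
    IsCZKernel fun z : Euc d => z j * fderiv ℝ k z (Pi.single i 1) := by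
  have hopen : IsOpen {x : Euc d | x ≠ 0} := isOpen_ne
  have hpj : ContDiff ℝ 1 fun z : Euc d => z j := contDiff_apply ℝ ℝ j
  have hk1 : ContDiffOn ℝ 1 k {x : Euc d | x ≠ 0} := hk_smooth.of_le (by exact_mod_cast le_top)
  have hcd : ContDiffOn ℝ 1 (fun z : Euc d => z j * fderiv ℝ k z (Pi.single i 1)) {x | x ≠ 0} :=
    hpj.contDiffOn.mul ((hk_smooth.fderiv_of_isOpen hopen (m := 1)
      (by norm_cast)).clm_apply contDiffOn_const)
  refine ⟨hcd, ?_, ?_⟩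
  · intro c hc x hx
    rw [fderiv_smul_of_homogeneous hk_hom hc hx, Real.rpow_sub hc, Real.rpow_one]
    simp only [Pi.smul_apply, smul_eq_mul, _root_.smul_apply]
    field_simp
  · intro r s hr hrs
    have hF := integral_annulus_fderiv_eq_zero hd (F := fun z => z j * k z)
      (hpj.contDiffOn.mul hk1) (fun c hc x hx => by
        rw [hk_hom c hc x hx, sub_eq_add_neg, Real.rpow_add hc, Real.rpow_one]
        simp only [Pi.smul_apply, smul_eq_mul]
        ring) (Pi.single i 1) hr hrs
    have hkm : ∫ z in annulus d r s, k z = 0 := by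
      rw [← hk_mean r s hr hrs]
      refine setIntegral_congr_set ?_
      have : ∀ᵐ z : Euc d, z ∉ Metric.sphere (0 : Euc d) r :=
        measure_eq_zero_iff_ae_notMem.1 (Measure.addHaar_sphere_of_ne_zero volume 0 hr.ne')
      filter_upwards [this] with z hz
      have hz' : ‖z‖ ≠ r := by simpa using hz
      refine propext ⟨fun h => ⟨h.1.le, h.2⟩, fun h => ⟨lt_of_le_of_ne h.1 hz'.symm, h.2⟩⟩
    have heq : ∀ z ∈ annulus d r s, fderiv ℝ (fun z : Euc d => z j * k z) z (Pi.single i 1) =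
        z j * fderiv ℝ k z (Pi.single i 1) + (Pi.single i 1 : Euc d) j * k z := by
      intro z hz
      have hz0 := ne_zero_of_mem_annulus hr.le hz
      have hdk : DifferentiableAt ℝ k z :=
        (hk1.contDiffAt (hopen.mem_nhds hz0)).differentiableAt one_ne_zero
      have hdj : HasFDerivAt (fun z : Euc d => z j)
        (ContinuousLinearMap.proj (R := ℝ) (φ := fun _ : Fin d => ℝ) j) z :=
        (ContinuousLinearMap.proj (R := ℝ) (φ := fun _ : Fin d => ℝ) j).hasFDerivAt
      rw [(hdj.fun_mul hdk.hasFDerivAt).fderiv]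
      simp
      ring
    rw [setIntegral_congr_fun (measurableSet_annulus d r s) heq, integral_add
      (integrableOn_annulus hcd.continuousOn hr)
      ((integrableOn_annulus hk1.continuousOn hr).const_mul _), integral_const_mul, hkm, mul_zero,
      add_zero] at hF
    exact hF

/-- Young's inequality for an `L¹` kernel acting on `L²`. -/
theorem eLpNorm_le_of_enorm_le_lintegral_sub_mul {d : ℕ} {G f h : Euc d → ℝ} (hG : Measurable G)
    (hf : Measurable f) (hh : ∀ x, ‖h x‖ₑ ≤ ∫⁻ y, ‖G (x - y)‖ₑ * ‖f y‖ₑ) :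
    eLpNorm h 2 volume ≤ (∫⁻ z, ‖G z‖ₑ) * eLpNorm f 2 volume := by
  have hsub : Measurable fun p : Euc d × Euc d => ‖G (p.1 - p.2)‖ₑ :=
    (hG.comp (measurable_fst.sub measurable_snd)).enorm
  have cauchy : ∀ x, (∫⁻ y, ‖G (x - y)‖ₑ * ‖f y‖ₑ) ^ (2 : ℝ) ≤
      (∫⁻ z, ‖G z‖ₑ) * ∫⁻ y, ‖G (x - y)‖ₑ * ‖f y‖ₑ ^ (2 : ℝ) := by
    intro x
    have hGx : Measurable fun y => ‖G (x - y)‖ₑ :=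
      (hG.comp (measurable_const.sub measurable_id)).enorm
    have h1 := ENNReal.lintegral_mul_le_Lp_mul_Lq volume Real.HolderConjugate.two_two
      (f := fun y => ‖G (x - y)‖ₑ ^ (1 / 2 : ℝ))
      (g := fun y => ‖G (x - y)‖ₑ ^ (1 / 2 : ℝ) * ‖f y‖ₑ)
      (hGx.pow_const _).aemeasurable ((hGx.pow_const _).mul hf.enorm).aemeasurable
    have h2 : ∀ a : ENNReal, (a ^ (1 / 2 : ℝ)) ^ (2 : ℝ) = a := fun a => by
      rw [← ENNReal.rpow_mul]; norm_num
    have h3 : ∀ a : ENNReal, a ^ (1 / 2 : ℝ) * a ^ (1 / 2 : ℝ) = a := fun a => by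
      rw [← ENNReal.rpow_add_of_nonneg _ _ (by norm_num) (by norm_num)]; norm_num
    simp only [Pi.mul_apply, ENNReal.mul_rpow_of_nonneg _ _ (zero_le_two : (0 : ℝ) ≤ 2), h2,
      ← mul_assoc, h3] at h1
    have h4 := ENNReal.rpow_le_rpow h1 (zero_le_two : (0 : ℝ) ≤ 2)
    rw [ENNReal.mul_rpow_of_nonneg _ _ zero_le_two, h2, h2,
      lintegral_sub_left_eq_self (fun z => ‖G z‖ₑ) x] at h4
    exact h4
  have hsq : ∫⁻ x, ‖h x‖ₑ ^ (2 : ℝ) ≤ (∫⁻ z, ‖G z‖ₑ) ^ (2 : ℝ) * ∫⁻ y, ‖f y‖ₑ ^ (2 : ℝ) := by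
    calc ∫⁻ x, ‖h x‖ₑ ^ (2 : ℝ)
        ≤ ∫⁻ x, (∫⁻ z, ‖G z‖ₑ) * ∫⁻ y, ‖G (x - y)‖ₑ * ‖f y‖ₑ ^ (2 : ℝ) :=
          lintegral_mono fun x =>
            (ENNReal.rpow_le_rpow (hh x) zero_le_two).trans (cauchy x)
      _ = (∫⁻ z, ‖G z‖ₑ) * ∫⁻ x, ∫⁻ y, ‖G (x - y)‖ₑ * ‖f y‖ₑ ^ (2 : ℝ) :=
          lintegral_const_mul _ (Measurable.lintegral_prod_right'
            (f := fun p : Euc d × Euc d => ‖G (p.1 - p.2)‖ₑ * ‖f p.2‖ₑ ^ (2 : ℝ))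
            (hsub.mul ((hf.comp measurable_snd).enorm.pow_const _)))
      _ = (∫⁻ z, ‖G z‖ₑ) * ∫⁻ y, ∫⁻ x, ‖G (x - y)‖ₑ * ‖f y‖ₑ ^ (2 : ℝ) := by
          rw [lintegral_lintegral_swap]
          exact (hsub.mul ((hf.comp measurable_snd).enorm.pow_const _)).aemeasurable
      _ = (∫⁻ z, ‖G z‖ₑ) * ∫⁻ y, (∫⁻ z, ‖G z‖ₑ) * ‖f y‖ₑ ^ (2 : ℝ) := by
          congr 1
          refine lintegral_congr fun y => ?_
          have hGy : Measurable fun x => ‖G (x - y)‖ₑ :=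
            (hG.comp (measurable_id.sub measurable_const)).enorm
          rw [lintegral_mul_const _ hGy, lintegral_sub_right_eq_self (fun z => ‖G z‖ₑ) y]
      _ = _ := by
          rw [lintegral_const_mul _ (hf.enorm.pow_const _), ← mul_assoc, ENNReal.rpow_two, sq]
  rw [eLpNorm_eq_lintegral_rpow_enorm_toReal two_ne_zero ENNReal.ofNat_ne_top,
    eLpNorm_eq_lintegral_rpow_enorm_toReal two_ne_zero ENNReal.ofNat_ne_top, ENNReal.toReal_ofNat]
  refine (ENNReal.rpow_le_rpow hsq (by norm_num)).trans ?_
  rw [ENNReal.mul_rpow_of_nonneg _ _ (by norm_num), ← ENNReal.rpow_mul]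
  norm_num

/-- The radial integrable majorant `‖z‖ ^ (α - d)` near the origin and `‖z‖ ^ (-d - 1)` at
infinity. -/
def majorant (d : ℕ) (α : ℝ) (z : Euc d) : ℝ :=
  if ‖z‖ ≤ 1 then ‖z‖ ^ (α - d) else ‖z‖ ^ (-(d : ℝ) - 1)

theorem majorant_nonneg (d : ℕ) (α : ℝ) (z : Euc d) : 0 ≤ majorant d α z := by
  unfold majorant
  split_ifs <;> positivity

theorem measurable_majorant (d : ℕ) (α : ℝ) : Measurable (majorant d α) :=
  Measurable.ite (measurableSet_le measurable_norm measurable_const)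
    (measurable_norm.pow_const _) (measurable_norm.pow_const _)

theorem integrable_majorant {d : ℕ} (hd : 1 ≤ d) {α : ℝ} (hα : 0 < α) :
    Integrable (majorant d α) := by
  have hne : Nonempty (Fin d) := ⟨⟨0, hd⟩⟩
  have hpow : ∀ y : ℝ, 0 < y → ∀ a : ℝ, y ^ (d - 1) * y ^ a = y ^ (d - 1 + a) := by
    intro y hy a
    rw [Real.rpow_add hy, ← Real.rpow_natCast]
    push_cast [hd]
    rfl
  refine (integrable_fun_norm_addHaar volume
    (f := fun t : ℝ => if t ≤ 1 then t ^ (α - d) else t ^ (-(d : ℝ) - 1))).2 ?_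
  rw [Module.finrank_fin_fun, ← Ioc_union_Ioi_eq_Ioi zero_le_one]
  refine IntegrableOn.union ?_ ?_
  · have h := (intervalIntegral.intervalIntegrable_rpow' (a := 0) (b := 1)
      (show -1 < α - 1 by linarith)).1
    refine h.congr_fun (fun y hy => ?_) measurableSet_Ioc
    simp only [if_pos hy.2, smul_eq_mul, hpow y hy.1]
    ring_nf
  · have h := integrableOn_Ioi_rpow_of_lt (show (-2 : ℝ) < -1 by norm_num) zero_lt_one
    refine h.congr_fun (fun y hy => ?_) measurableSet_Ioi
    have hy' : (1 : ℝ) < y := hy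
    simp only [if_neg (not_le.2 hy'), smul_eq_mul, hpow y (zero_lt_one.trans hy')]
    ring_nf

/-- The truncated principal value integrals of a smooth function converge. -/
theorem IsCZKernel.exists_tendsto_truncation {d : ℕ} (hd : 1 ≤ d) {m : Euc d → ℝ}
    (hm : IsCZKernel m) {f : Euc d → ℝ} (hf : ContDiff ℝ (⊤ : ℕ∞) f) (hfc : HasCompactSupport f)
    (x : Euc d) :
    ∃ l, Tendsto (fun ε => ∫ y, (annulus d ε 1).indicator m (x - y) * f y) (𝓝[>] 0) (𝓝 l) := by
  have hne : Nonempty (Fin d) := ⟨⟨0, hd⟩⟩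
  obtain ⟨L, hL⟩ := hf.lipschitzWith_of_hasCompactSupport hfc (by simp)
  obtain ⟨B, hB0, hB⟩ := exists_norm_le_mul_rpow_of_homogeneous hm.continuousOn hm.hom
  have hmm : Measurable m := measurable_of_continuousOn_compl_singleton 0 hm.continuousOn
  have hsubm : Measurable fun y : Euc d => x - y := measurable_const.sub measurable_id
  obtain ⟨Cf, hCf⟩ := hfc.exists_bound_of_continuous hf.continuous
  refine ⟨∫ y, (annulus d 0 1).indicator m (x - y) * (f y - f x), ?_⟩
  have hlim : Tendsto (fun ε => ∫ y, (annulus d ε 1).indicator m (x - y) * (f y - f x))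
      (𝓝[>] 0) (𝓝 (∫ y, (annulus d 0 1).indicator m (x - y) * (f y - f x))) := by
    refine tendsto_integral_filter_of_dominated_convergence
      (fun y => B * L * majorant d 1 (x - y)) ?_ ?_
      (((integrable_majorant hd one_pos).comp_sub_left x).const_mul _) ?_
    · exact Eventually.of_forall fun ε => (((hmm.indicator (measurableSet_annulus d ε 1)).comp
        hsubm).mul (hf.continuous.measurable.sub measurable_const)).aestronglyMeasurable
    · refine Filter.eventually_of_mem self_mem_nhdsWithin fun ε (hε : 0 < ε) =>
        Eventually.of_forall fun y => ?_
      by_cases hy : x - y ∈ annulus d ε 1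
      · have hy0 := ne_zero_of_mem_annulus hε.le hy
        have hpos : 0 < ‖x - y‖ := norm_pos_iff.2 hy0
        rw [indicator_of_mem hy, norm_mul, majorant, if_pos hy.2]
        have h1 : ‖f y - f x‖ ≤ L * ‖x - y‖ := by
          rw [← norm_neg, neg_sub]; exact hL.norm_sub_le x y
        calc ‖m (x - y)‖ * ‖f y - f x‖
            ≤ (B * ‖x - y‖ ^ (-(d : ℝ))) * (L * ‖x - y‖) := by
              gcongr
              exact hB _ hy0
          _ = B * L * ‖x - y‖ ^ (1 - (d : ℝ)) := by
              rw [sub_eq_add_neg 1, Real.rpow_add hpos, Real.rpow_one]; ring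
      · rw [indicator_of_notMem hy, zero_mul, norm_zero]
        exact mul_nonneg (by positivity) (majorant_nonneg _ _ _)
    · filter_upwards [Measure.ae_ne volume x] with y hy
      have hpos : 0 < ‖x - y‖ := norm_pos_iff.2 (sub_ne_zero.2 hy.symm)
      refine tendsto_const_nhds.congr' ?_
      filter_upwards [Ioo_mem_nhdsGT hpos] with ε hε
      have : x - y ∈ annulus d ε 1 ↔ x - y ∈ annulus d 0 1 :=
        ⟨fun h => ⟨hpos, h.2⟩, fun h => ⟨hε.2, h.2⟩⟩
      by_cases hy1 : x - y ∈ annulus d 0 1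
      · rw [indicator_of_mem hy1, indicator_of_mem (this.2 hy1)]
      · rw [indicator_of_notMem hy1, indicator_of_notMem (this.not.2 hy1)]
  refine hlim.congr' ?_
  filter_upwards [Ioo_mem_nhdsGT (zero_lt_one' ℝ)] with ε hε
  have hi := (hm.integrable_indicator_annulus (r := ε) (s := 1) hε.1).comp_sub_left x
  have hi2 : Integrable fun y => (annulus d ε 1).indicator m (x - y) * f y :=
    hi.mul_bdd hf.continuous.aestronglyMeasurable (Eventually.of_forall hCf)
  simp only [mul_sub]
  rw [integral_sub hi2 (hi.mul_const _), integral_mul_const,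
    integral_sub_left_eq_self ((annulus d ε 1).indicator m),
    integral_indicator (measurableSet_annulus d ε 1), hm.mean ε 1 hε.1 hε.2.le, zero_mul, sub_zero]

theorem InC1a.norm_taylor_le {d : ℕ} {α M : ℝ} (hα : 0 ≤ α) {η : Euc d → Euc d}
    (hη : InC1a α M η) (x y : Euc d) :
    ‖η x - η y - fderiv ℝ η x (x - y)‖ ≤ M * ‖x - y‖ ^ α * ‖x - y‖ := by
  have hM : 0 ≤ M := (norm_nonneg _).trans (hη.2.1 0)
  have h := (convex_closedBall x ‖x - y‖).norm_image_sub_le_of_norm_fderiv_le' (𝕜 := ℝ) (f := η)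
    (φ := fderiv ℝ η x) (C := M * ‖x - y‖ ^ α) (x := y) (y := x) (fun w _ => hη.1 w)
    (fun w hw => ?_) ?_ ?_
  · exact h
  · refine (hη.2.2.2 w x).trans ?_
    have : ‖w - x‖ ≤ ‖x - y‖ := by simpa [dist_eq_norm] using hw
    gcongr
  · simp [dist_eq_norm, norm_sub_rev]
  · simp

/-- The kernel `(η x - η y) · p (x - y)` minus, near the diagonal, its linearisation. -/
def commRemainder {d : ℕ} (η : Euc d → Euc d) (p : Fin d → Euc d → ℝ) (x y : Euc d) : ℝ :=
  ∑ i, (η x i - η y i) * p i (x - y) -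
    if ‖x - y‖ ≤ 1 then
      ∑ i, ∑ j, fderiv ℝ η x (Pi.single j 1) i * ((x - y) j * p i (x - y)) else 0

theorem clm_apply_eq_sum {d : ℕ} (A : Euc d →L[ℝ] Euc d) (z : Euc d) (i : Fin d) :
    A z i = ∑ j, A (Pi.single j 1) i * z j := by
  conv_lhs => rw [pi_eq_sum_univ' z]
  simp [map_sum, mul_comm, Finset.sum_apply]

theorem norm_commRemainder_le {d : ℕ} {α M B : ℝ} (hα : 0 ≤ α) (hB : 0 ≤ B)
    {p : Fin d → Euc d → ℝ} (hp : ∀ i z, z ≠ 0 → ‖p i z‖ ≤ B * ‖z‖ ^ (-(d : ℝ) - 1))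
    {η : Euc d → Euc d} (hη : InC1a α M η) {x y : Euc d} (hxy : x ≠ y) :
    ‖commRemainder η p x y‖ ≤ 2 * d * B * M * majorant d α (x - y) := by
  have hM : 0 ≤ M := (norm_nonneg _).trans (hη.2.1 0)
  have hz : x - y ≠ 0 := sub_ne_zero.2 hxy
  have hpos : 0 < ‖x - y‖ := norm_pos_iff.2 hz
  have key : ∀ (u : Euc d) (b : ℝ), ‖u‖ ≤ b →
      ‖∑ i, u i * p i (x - y)‖ ≤ d * B * (b * ‖x - y‖ ^ (-(d : ℝ) - 1)) := by
    intro u b hu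
    have hb : 0 ≤ b := (norm_nonneg _).trans hu
    calc ‖∑ i, u i * p i (x - y)‖ ≤ ∑ _i : Fin d, b * (B * ‖x - y‖ ^ (-(d : ℝ) - 1)) := by
          refine norm_sum_le_of_le _ fun i _ => ?_
          rw [norm_mul]
          exact mul_le_mul ((norm_le_pi_norm u i).trans hu) (hp i _ hz) (norm_nonneg _) hb
      _ = _ := by simp; ring
  unfold commRemainder majorant
  split_ifs with h
  · have e : ∑ i, (η x i - η y i) * p i (x - y) -
        ∑ i, ∑ j, fderiv ℝ η x (Pi.single j 1) i * ((x - y) j * p i (x - y)) =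
        ∑ i, (η x - η y - fderiv ℝ η x (x - y)) i * p i (x - y) := by
      rw [← Finset.sum_sub_distrib]
      refine Finset.sum_congr rfl fun i _ => ?_
      rw [Pi.sub_apply, Pi.sub_apply, clm_apply_eq_sum _ (x - y) i, sub_mul _ (∑ j, _),
        Finset.sum_mul]
      congr 1
      exact Finset.sum_congr rfl fun j _ => by ring
    rw [e]
    refine (key _ _ (hη.norm_taylor_le hα x y)).trans ?_
    have e2 : ‖x - y‖ ^ α * ‖x - y‖ * ‖x - y‖ ^ (-(d : ℝ) - 1) = ‖x - y‖ ^ (α - d) := by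
      nth_rewrite 2 [← Real.rpow_one ‖x - y‖]
      rw [← Real.rpow_add hpos, ← Real.rpow_add hpos]
      ring_nf
    calc d * B * (M * ‖x - y‖ ^ α * ‖x - y‖ * ‖x - y‖ ^ (-(d : ℝ) - 1))
        = 1 * (d * B * M * ‖x - y‖ ^ (α - d)) := by rw [← e2]; ring
      _ ≤ 2 * (d * B * M * ‖x - y‖ ^ (α - d)) := by
          gcongr
          norm_num
      _ = _ := by ring
  · rw [sub_zero]
    refine (key (η x - η y) (2 * M) ?_).trans (le_of_eq (by ring))
    linarith [norm_sub_le (η x) (η y), hη.2.1 x, hη.2.1 y]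

theorem measurable_commRemainder {d : ℕ} {p : Fin d → Euc d → ℝ} (hp : ∀ i, Measurable (p i))
    {η : Euc d → Euc d} (hη : Measurable η) :
    Measurable fun q : Euc d × Euc d => commRemainder η p q.1 q.2 := by
  have hs : Measurable fun q : Euc d × Euc d => q.1 - q.2 := measurable_fst.sub measurable_snd
  have hps : ∀ i, Measurable fun q : Euc d × Euc d => p i (q.1 - q.2) := fun i => (hp i).comp hs
  have hsj : ∀ j, Measurable fun q : Euc d × Euc d => (q.1 - q.2) j := fun j =>
    (measurable_pi_apply j).comp hs
  have hηi : ∀ i, Measurable fun x => η x i := fun i => (measurable_pi_apply i).comp hη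
  have hD : ∀ i j, Measurable fun q : Euc d × Euc d => fderiv ℝ η q.1 (Pi.single j 1) i :=
    fun i j => (measurable_pi_apply i).comp
      ((measurable_fderiv_apply_const ℝ η (Pi.single j 1)).comp measurable_fst)
  refine Measurable.sub ?_ (Measurable.ite (measurableSet_le hs.norm measurable_const) ?_
    measurable_const)
  · exact Finset.measurable_fun_sum _ fun i _ =>
      (((hηi i).comp measurable_fst).sub ((hηi i).comp measurable_snd)).mul (hps i)
  · exact Finset.measurable_fun_sum _ fun i _ => Finset.measurable_fun_sum _ fun j _ =>
      (hD i j).mul ((hsj j).mul (hps i))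

section Truncation

variable {d : ℕ} {α M B : ℝ} {p : Fin d → Euc d → ℝ} {η : Euc d → Euc d} {f : Euc d → ℝ}

theorem integrable_commRemainder_mul (hd : 1 ≤ d) (hα : 0 < α) (hB : 0 ≤ B)
    (hp : ∀ i z, z ≠ 0 → ‖p i z‖ ≤ B * ‖z‖ ^ (-(d : ℝ) - 1)) (hpm : ∀ i, Measurable (p i))
    (hη : InC1a α M η) (hf : ContDiff ℝ (⊤ : ℕ∞) f) (hfc : HasCompactSupport f) (x : Euc d) :
    Integrable fun y => commRemainder η p x y * f y := by
  have hne : Nonempty (Fin d) := ⟨⟨0, hd⟩⟩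
  obtain ⟨Cf, hCf⟩ := hfc.exists_bound_of_continuous hf.continuous
  refine Integrable.mul_bdd (c := Cf) ?_ hf.continuous.aestronglyMeasurable
    (Eventually.of_forall hCf)
  refine (((integrable_majorant hd hα).comp_sub_left x).const_mul (2 * d * B * M)).mono'
    ((measurable_commRemainder hpm hη.1.continuous.measurable).comp
      measurable_prodMk_left).aestronglyMeasurable ?_
  filter_upwards [Measure.ae_ne volume x] with y hy
  exact norm_commRemainder_le hα.le hB hp hη hy.symm

theorem setIntegral_comm_kernel_eq (hd : 1 ≤ d) (hα : 0 < α) (hB : 0 ≤ B)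
    (hp : ∀ i z, z ≠ 0 → ‖p i z‖ ≤ B * ‖z‖ ^ (-(d : ℝ) - 1)) (hpm : ∀ i, Measurable (p i))
    (hcz : ∀ i j, IsCZKernel fun z : Euc d => z j * p i z)
    (hη : InC1a α M η) (hf : ContDiff ℝ (⊤ : ℕ∞) f) (hfc : HasCompactSupport f) (x : Euc d)
    {ε : ℝ} (hε : 0 < ε) :
    ∫ y in {y : Euc d | ε < ‖x - y‖}, (∑ i, (η x i - η y i) * p i (x - y)) * f y =
      (∫ y in {y : Euc d | ε < ‖x - y‖}, commRemainder η p x y * f y) +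
        ∑ i, ∑ j, fderiv ℝ η x (Pi.single j 1) i *
          ∫ y, (annulus d ε 1).indicator (fun z : Euc d => z j * p i z) (x - y) * f y := by
  have hS : MeasurableSet {y : Euc d | ε < ‖x - y‖} :=
    measurableSet_lt measurable_const (measurable_const.sub measurable_id).norm
  obtain ⟨Cf, hCf⟩ := hfc.exists_bound_of_continuous hf.continuous
  have hi : ∀ i j, Integrable fun y =>
      (annulus d ε 1).indicator (fun z : Euc d => z j * p i z) (x - y) * f y := fun i j =>
    (((hcz i j).integrable_indicator_annulus (s := 1) hε).comp_sub_left x).mul_bdd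
      hf.continuous.aestronglyMeasurable (Eventually.of_forall hCf)
  have hR := integrable_commRemainder_mul hd hα hB hp hpm hη hf hfc x
  rw [← integral_indicator hS, ← integral_indicator hS]
  simp_rw [← integral_const_mul]
  rw [Finset.sum_congr rfl fun i _ => (integral_finsetSum (μ := volume) Finset.univ
    fun j _ => (hi i j).const_mul (fderiv ℝ η x (Pi.single j 1) i)).symm]
  rw [← integral_finsetSum _ fun i _ => integrable_finsetSum _ fun j _ => (hi i j).const_mul _,
    ← integral_add (hR.indicator hS)
      (integrable_finsetSum _ fun i _ => integrable_finsetSum _ fun j _ => (hi i j).const_mul _)]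
  refine integral_congr_ae (Eventually.of_forall fun y => ?_)
  by_cases hy : ε < ‖x - y‖
  · have hy' : y ∈ {y : Euc d | ε < ‖x - y‖} := hy
    simp only [indicator_of_mem hy', commRemainder]
    by_cases h1 : ‖x - y‖ ≤ 1
    · have ha : x - y ∈ annulus d ε 1 := ⟨hy, h1⟩
      simp only [indicator_of_mem ha, if_pos h1, sub_mul, Finset.sum_mul, ← mul_assoc]
      ring
    · have ha : x - y ∉ annulus d ε 1 := fun h => h1 h.2
      simp [indicator_of_notMem ha, if_neg h1]
  · have hy' : y ∉ {y : Euc d | ε < ‖x - y‖} := hy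
    have ha : x - y ∉ annulus d ε 1 := fun h => hy h.1
    simp [indicator_of_notMem hy', indicator_of_notMem ha]

theorem exists_tendsto_setIntegral_comm_kernel (hd : 1 ≤ d) (hα : 0 < α) (hB : 0 ≤ B)
    (hp : ∀ i z, z ≠ 0 → ‖p i z‖ ≤ B * ‖z‖ ^ (-(d : ℝ) - 1)) (hpm : ∀ i, Measurable (p i))
    (hcz : ∀ i j, IsCZKernel fun z : Euc d => z j * p i z)
    (hη : InC1a α M η) (hf : ContDiff ℝ (⊤ : ℕ∞) f) (hfc : HasCompactSupport f) (x : Euc d) :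
    ∃ l, Tendsto (fun ε : ℝ => ∫ y in {y : Euc d | ε < ‖x - y‖},
      (∑ i, (η x i - η y i) * p i (x - y)) * f y) (𝓝[>] 0) (𝓝 l) := by
  have hne : Nonempty (Fin d) := ⟨⟨0, hd⟩⟩
  choose l hl using fun i j => (hcz i j).exists_tendsto_truncation hd hf hfc x
  refine ⟨(∫ y, commRemainder η p x y * f y) +
    ∑ i, ∑ j, fderiv ℝ η x (Pi.single j 1) i * l i j, ?_⟩
  have hR := integrable_commRemainder_mul hd hα hB hp hpm hη hf hfc x
  have hS : ∀ ε : ℝ, MeasurableSet {y : Euc d | ε < ‖x - y‖} := fun ε =>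
    measurableSet_lt measurable_const (measurable_const.sub measurable_id).norm
  have h1 : Tendsto (fun ε : ℝ => ∫ y in {y : Euc d | ε < ‖x - y‖}, commRemainder η p x y * f y)
      (𝓝[>] 0) (𝓝 (∫ y, commRemainder η p x y * f y)) := by
    simp_rw [← integral_indicator (hS _)]
    refine tendsto_integral_filter_of_dominated_convergence _ ?_ ?_ hR.norm ?_
    · exact Eventually.of_forall fun ε => (hR.indicator (hS ε)).aestronglyMeasurable
    · exact Eventually.of_forall fun ε => Eventually.of_forall fun y =>
        norm_indicator_le_norm_self _ _
    · filter_upwards [Measure.ae_ne volume x] with y hy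
      have hpos : 0 < ‖x - y‖ := norm_pos_iff.2 (sub_ne_zero.2 hy.symm)
      refine tendsto_const_nhds.congr' ?_
      filter_upwards [Ioo_mem_nhdsGT hpos] with ε hε
      have hy' : y ∈ {y : Euc d | ε < ‖x - y‖} := hε.2
      rw [indicator_of_mem hy']
  refine (h1.add (tendsto_finsetSum _ fun i _ => tendsto_finsetSum _ fun j _ =>
    (hl i j).const_mul _)).congr' ?_
  filter_upwards [self_mem_nhdsWithin] with ε hε
  exact (setIntegral_comm_kernel_eq hd hα hB hp hpm hcz hη hf hfc x hε).symm

end Truncation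

section L2Bound

variable {d : ℕ} {α M B : ℝ} {p : Fin d → Euc d → ℝ} {η : Euc d → Euc d} {f : Euc d → ℝ}

theorem stronglyMeasurable_setIntegral_commRemainder (hpm : ∀ i, Measurable (p i))
    (hη : Measurable η) (hf : Measurable f) (ε : ℝ) :
    StronglyMeasurable fun x =>
      ∫ y in {y : Euc d | ε < ‖x - y‖}, commRemainder η p x y * f y := by
  have hS : ∀ x : Euc d, MeasurableSet {y : Euc d | ε < ‖x - y‖} := fun x =>
    measurableSet_lt measurable_const (measurable_const.sub measurable_id).norm
  have hS2 : MeasurableSet {q : Euc d × Euc d | ε < ‖q.1 - q.2‖} :=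
    measurableSet_lt measurable_const (measurable_fst.sub measurable_snd).norm
  simp_rw [← integral_indicator (hS _)]
  exact StronglyMeasurable.integral_prod_right'
    (f := {q : Euc d × Euc d | ε < ‖q.1 - q.2‖}.indicator fun q => commRemainder η p q.1 q.2 * f q.2)
    (((measurable_commRemainder hpm hη).mul (hf.comp measurable_snd)).indicator
      hS2).stronglyMeasurable

theorem stronglyMeasurable_integral_sub_mul {m : Euc d → ℝ} (hm : Measurable m)
    (hf : Measurable f) : StronglyMeasurable fun x => ∫ y, m (x - y) * f y :=
  StronglyMeasurable.integral_prod_right' (f := fun q : Euc d × Euc d => m (q.1 - q.2) * f q.2)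
    ((hm.comp (measurable_fst.sub measurable_snd)).mul
      (hf.comp measurable_snd)).stronglyMeasurable

theorem eLpNorm_setIntegral_commRemainder_le (hd : 1 ≤ d) (hα : 0 < α) (hB : 0 ≤ B)
    (hp : ∀ i z, z ≠ 0 → ‖p i z‖ ≤ B * ‖z‖ ^ (-(d : ℝ) - 1)) (hη : InC1a α M η)
    (hf : Measurable f) (ε : ℝ) :
    eLpNorm (fun x => ∫ y in {y : Euc d | ε < ‖x - y‖}, commRemainder η p x y * f y) 2 volume ≤
      ENNReal.ofReal (2 * d * B * M * ∫ z, majorant d α z) * eLpNorm f 2 volume := by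
  have hne : Nonempty (Fin d) := ⟨⟨0, hd⟩⟩
  have hM : 0 ≤ M := (norm_nonneg _).trans (hη.2.1 0)
  have hc : 0 ≤ 2 * d * B * M := by positivity
  refine (eLpNorm_le_of_enorm_le_lintegral_sub_mul (G := fun z => 2 * d * B * M * majorant d α z)
    ((measurable_majorant d α).const_mul _) hf fun x => ?_).trans ?_
  · refine (enorm_integral_le_lintegral_enorm _).trans ((setLIntegral_le_lintegral _ _).trans ?_)
    refine lintegral_mono_ae ?_
    filter_upwards [Measure.ae_ne volume x] with y hy
    rw [enorm_mul]
    gcongr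
    refine enorm_le_iff_norm_le.2 ?_
    rw [Real.norm_of_nonneg (mul_nonneg hc (majorant_nonneg d α _))]
    exact norm_commRemainder_le hα.le hB hp hη hy.symm
  · rw [← integral_const_mul, ← ofReal_integral_norm_eq_lintegral_enorm
      ((integrable_majorant hd hα).const_mul _)]
    simp_rw [Real.norm_of_nonneg (mul_nonneg hc (majorant_nonneg d α _))]
    exact le_rfl

theorem norm_fderiv_apply_single_le (hη : InC1a α M η) (x : Euc d) (i j : Fin d) :
    ‖fderiv ℝ η x (Pi.single j 1) i‖ ≤ M := by
  refine (norm_le_pi_norm _ i).trans ((ContinuousLinearMap.le_opNorm _ _).trans ?_)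
  rw [Pi.norm_single, norm_one, mul_one]
  exact hη.2.2.1 x

theorem stronglyMeasurable_setIntegral_comm_kernel (hpm : ∀ i, Measurable (p i))
    (hη : Measurable η) (hf : Measurable f) (ε : ℝ) :
    StronglyMeasurable fun x => ∫ y in {y : Euc d | ε < ‖x - y‖},
      (∑ i, (η x i - η y i) * p i (x - y)) * f y := by
  have hS : ∀ x : Euc d, MeasurableSet {y : Euc d | ε < ‖x - y‖} := fun x =>
    measurableSet_lt measurable_const (measurable_const.sub measurable_id).norm
  have hs : Measurable fun q : Euc d × Euc d => q.1 - q.2 := measurable_fst.sub measurable_snd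
  have hS2 : MeasurableSet {q : Euc d × Euc d | ε < ‖q.1 - q.2‖} :=
    measurableSet_lt measurable_const hs.norm
  have hηi : ∀ i, Measurable fun x => η x i := fun i => (measurable_pi_apply i).comp hη
  simp_rw [← integral_indicator (hS _)]
  exact StronglyMeasurable.integral_prod_right'
    (f := {q : Euc d × Euc d | ε < ‖q.1 - q.2‖}.indicator fun q => (∑ i, (η q.1 i - η q.2 i) * p i (q.1 - q.2)) * f q.2)
    (((Finset.measurable_fun_sum _ fun i _ => (((hηi i).comp measurable_fst).sub
      ((hηi i).comp measurable_snd)).mul ((hpm i).comp hs)).mul (hf.comp measurable_snd)).indicator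
      hS2).stronglyMeasurable

theorem measurable_univ_sum {ι : Type*} [Fintype ι] {U : ι → Euc d → ℝ}
    (hU : ∀ i, Measurable (U i)) : Measurable (∑ i, U i) := by
  rw [Finset.sum_fn]
  exact Finset.measurable_fun_sum _ fun i _ => hU i

theorem eLpNorm_sum_le_ofReal_mul {ι : Type*} [Fintype ι] {U : ι → Euc d → ℝ} {a : ι → ℝ}
    {b : ENNReal} (hU : ∀ i, Measurable (U i)) (ha : ∀ i, 0 ≤ a i)
    (h : ∀ i, eLpNorm (U i) 2 volume ≤ ENNReal.ofReal (a i) * b) :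
    eLpNorm (∑ i, U i) 2 volume ≤ ENNReal.ofReal (∑ i, a i) * b := by
  refine (eLpNorm_sum_le (fun i _ => (hU i).aestronglyMeasurable) one_le_two).trans ?_
  rw [ENNReal.ofReal_sum_of_nonneg fun i _ => ha i, Finset.sum_mul]
  exact Finset.sum_le_sum fun i _ => h i

theorem eLpNorm_setIntegral_comm_kernel_le (hd : 1 ≤ d) (hα : 0 < α) (hB : 0 ≤ B)
    (hp : ∀ i z, z ≠ 0 → ‖p i z‖ ≤ B * ‖z‖ ^ (-(d : ℝ) - 1)) (hpm : ∀ i, Measurable (p i))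
    (hcz : ∀ i j, IsCZKernel fun z : Euc d => z j * p i z)
    (hη : InC1a α M η) (hf : ContDiff ℝ (⊤ : ℕ∞) f) (hfc : HasCompactSupport f)
    {ε : ℝ} (hε : 0 < ε) {A : Fin d → Fin d → ℝ} (hA0 : ∀ i j, 0 ≤ A i j)
    (hA : ∀ i j, eLpNorm (fun x => ∫ y,
      (annulus d ε 1).indicator (fun z : Euc d => z j * p i z) (x - y) * f y) 2 volume ≤
        ENNReal.ofReal (A i j) * eLpNorm f 2 volume) :
    eLpNorm (fun x => ∫ y in {y : Euc d | ε < ‖x - y‖},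
        (∑ i, (η x i - η y i) * p i (x - y)) * f y) 2 volume ≤
      ENNReal.ofReal ((2 * d * B * (∫ z, majorant d α z) + ∑ i, ∑ j, A i j) * M) *
        eLpNorm f 2 volume := by
  have hM : 0 ≤ M := (norm_nonneg _).trans (hη.2.1 0)
  have hηm : Measurable η := hη.1.continuous.measurable
  have hfm : Measurable f := hf.continuous.measurable
  set V : Fin d → Fin d → Euc d → ℝ := fun i j x => ∫ y,
    (annulus d ε 1).indicator (fun z : Euc d => z j * p i z) (x - y) * f y with hV
  have hVm : ∀ i j, Measurable (V i j) := fun i j =>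
    (stronglyMeasurable_integral_sub_mul (((measurable_pi_apply j).mul (hpm i)).indicator
      (measurableSet_annulus d ε 1)) hfm).measurable
  set U : Fin d → Fin d → Euc d → ℝ := fun i j x =>
    fderiv ℝ η x (Pi.single j 1) i * V i j x with hU
  have hUm : ∀ i j, Measurable (U i j) := fun i j => ((measurable_pi_apply i).comp
    (measurable_fderiv_apply_const ℝ η (Pi.single j 1))).mul (hVm i j)
  have hUle : ∀ i j, eLpNorm (U i j) 2 volume ≤
      ENNReal.ofReal (M * A i j) * eLpNorm f 2 volume := by
    intro i j
    refine (eLpNorm_le_mul_eLpNorm_of_ae_le_mul (g := V i j) (c := M)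
      (Eventually.of_forall fun x => ?_) 2).trans ?_
    · rw [hU, norm_mul]
      gcongr
      exact norm_fderiv_apply_single_le hη x i j
    · rw [ENNReal.ofReal_mul hM, mul_assoc]
      gcongr
      exact hA i j
  have hsum : eLpNorm (∑ i, ∑ j, U i j) 2 volume ≤
      ENNReal.ofReal (∑ i, ∑ j, M * A i j) * eLpNorm f 2 volume :=
    eLpNorm_sum_le_ofReal_mul (fun i => measurable_univ_sum (hUm i))
      (fun i => Finset.sum_nonneg fun j _ => mul_nonneg hM (hA0 i j)) fun i =>
      eLpNorm_sum_le_ofReal_mul (hUm i) (fun j => mul_nonneg hM (hA0 i j)) (hUle i)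
  have heq : (fun x => ∫ y in {y : Euc d | ε < ‖x - y‖},
      (∑ i, (η x i - η y i) * p i (x - y)) * f y) =
      (fun x => ∫ y in {y : Euc d | ε < ‖x - y‖}, commRemainder η p x y * f y) +
        ∑ i, ∑ j, U i j := by
    funext x
    rw [setIntegral_comm_kernel_eq hd hα hB hp hpm hcz hη hf hfc x hε]
    simp [hU, hV, Finset.sum_apply]
  have hI : 0 ≤ ∫ z, majorant d α z := integral_nonneg (majorant_nonneg d α)
  rw [heq]
  refine (eLpNorm_add_le
    (stronglyMeasurable_setIntegral_commRemainder hpm hηm hfm ε).aestronglyMeasurable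
    (measurable_univ_sum fun i => measurable_univ_sum (hUm i)).aestronglyMeasurable
    one_le_two).trans ?_
  refine (add_le_add (eLpNorm_setIntegral_commRemainder_le hd hα hB hp hη hfm ε) hsum).trans ?_
  rw [← add_mul, ← ENNReal.ofReal_add (by positivity) (Finset.sum_nonneg fun i _ =>
    Finset.sum_nonneg fun j _ => mul_nonneg hM (hA0 i j))]
  simp_rw [← Finset.mul_sum]
  rw [show 2 * d * B * M * (∫ z, majorant d α z) + M * ∑ i, ∑ j, A i j =
    (2 * d * B * (∫ z, majorant d α z) + ∑ i, ∑ j, A i j) * M by ring]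

end L2Bound

/-- `L²` bound in the proof of Lemma `steadycomm`: the operator `T` with
kernel `K(x,y) = (η(x)−η(y))·∇k(x−y)` is bounded on `L²(ℝ^d)`, with norm controlled by
`‖η‖_{C^{1+α}}`. -/
theorem stmt15 (d : ℕ) (hd : 1 ≤ d) (α : ℝ) (hα0 : 0 < α) (hα1 : α < 1)
    (k : Euc d → ℝ)
    (hk_smooth : ContDiffOn ℝ (⊤ : ℕ∞) k {x : Euc d | x ≠ 0})
    (hk_hom : ∀ c : ℝ, 0 < c → ∀ x : Euc d, x ≠ 0 → k (c • x) = c ^ (-(d : ℝ)) * k x)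
    (hk_mean : ∀ r₁ r₂ : ℝ, 0 < r₁ → r₁ ≤ r₂ →
      (∫ z in {z : Euc d | r₁ ≤ ‖z‖ ∧ ‖z‖ ≤ r₂}, k z) = 0) :
    ∃ C > (0 : ℝ), ∀ (η : Euc d → Euc d) (Mη : ℝ), InC1a α Mη η →
      ∀ f : Euc d → ℝ, ContDiff ℝ (⊤ : ℕ∞) f → HasCompactSupport f →
        eLpNorm
            (fun x => limUnder (𝓝[>] (0 : ℝ)) fun ε =>
              ∫ y in {y : Euc d | ε < ‖x - y‖},
                (∑ i, (η x i - η y i) * fderiv ℝ k (x - y) (Pi.single i 1)) * f y)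
            2 volume ≤
          ENNReal.ofReal (C * Mη) * eLpNorm f 2 volume := by
  have hopen : IsOpen {x : Euc d | x ≠ 0} := isOpen_ne
  have hDc : ContinuousOn (fderiv ℝ k) {x : Euc d | x ≠ 0} :=
    hk_smooth.continuousOn_fderiv_of_isOpen hopen (by exact_mod_cast le_top)
  obtain ⟨B, hB, hDB⟩ := exists_norm_le_mul_rpow_of_homogeneous hDc
    fun c hc x hx => fderiv_smul_of_homogeneous hk_hom hc hx
  set p : Fin d → Euc d → ℝ := fun i z => fderiv ℝ k z (Pi.single i 1) with hp_def
  have hp : ∀ i z, z ≠ 0 → ‖p i z‖ ≤ B * ‖z‖ ^ (-(d : ℝ) - 1) := by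
    intro i z hz
    refine (ContinuousLinearMap.le_opNorm _ _).trans ?_
    rw [Pi.norm_single, norm_one, mul_one]
    exact hDB z hz
  have hpm : ∀ i, Measurable (p i) := fun i =>
    measurable_of_continuousOn_compl_singleton 0 (hDc.clm_apply continuousOn_const)
  have hcz : ∀ i j, IsCZKernel fun z : Euc d => z j * p i z := fun i j =>
    isCZKernel_coord_mul_fderiv hd hk_smooth hk_hom hk_mean i j
  choose A hA0 hA using fun i j => (hcz i j).exists_eLpNorm_truncation_le
  have hI : 0 ≤ ∫ z, majorant d α z := integral_nonneg (majorant_nonneg d α)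
  have hAs : 0 ≤ ∑ i, ∑ j, A i j :=
    Finset.sum_nonneg fun i _ => Finset.sum_nonneg fun j _ => hA0 i j
  refine ⟨2 * d * B * (∫ z, majorant d α z) + ∑ i, ∑ j, A i j + 1, by positivity, ?_⟩
  intro η M hη f hf hfc
  have hM : 0 ≤ M := (norm_nonneg _).trans (hη.2.1 0)
  choose l hl using exists_tendsto_setIntegral_comm_kernel hd hα0 hB hp hpm hcz hη hf hfc
  have hlim : (fun x => limUnder (𝓝[>] (0 : ℝ)) fun ε =>
      ∫ y in {y : Euc d | ε < ‖x - y‖}, (∑ i, (η x i - η y i) * p i (x - y)) * f y) = l :=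
    funext fun x => (hl x).limUnder_eq
  rw [hlim]
  have hseq : Tendsto (fun N : ℕ => (1 / 2 : ℝ) ^ N) atTop (𝓝[>] 0) :=
    tendsto_nhdsWithin_iff.2 ⟨tendsto_pow_atTop_nhds_zero_of_lt_one (by norm_num) (by norm_num),
      Eventually.of_forall fun N => by simp⟩
  refine (Lp.eLpNorm_lim_le_liminf_eLpNorm (fun N : ℕ =>
    (stronglyMeasurable_setIntegral_comm_kernel hpm hη.1.continuous.measurable
      hf.continuous.measurable ((1 / 2 : ℝ) ^ N)).aestronglyMeasurable) l
    (Eventually.of_forall fun x => (hl x).comp hseq)).trans ?_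
  refine liminf_le_of_le (by isBoundedDefault) fun b hb => ?_
  obtain ⟨N, hN⟩ := hb.exists
  refine hN.trans ((eLpNorm_setIntegral_comm_kernel_le hd hα0 hB hp hpm hcz hη hf hfc
    (by positivity) hA0 fun i j => hA i j N f hf hfc).trans ?_)
  gcongr ?_ * _
  exact ENNReal.ofReal_le_ofReal (mul_le_mul_of_nonneg_right (by linarith) hM)

end
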